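/- arXiv:math/0002034 — 2 statements merged into one kernel-verified Lean document; each statement's English description precedes it below -/
import Mathlib

section
/- For every M ≥ 1 there is a constant c > 0 depending only on M such that the following holds. Let G = (V,E) be a finite connected simple graph with n ≥ 2 vertices and maximal degree at most M which admits a circle packing (equivalently, is planar). Then for every vertex v ∈ V, the expected cover time of the simple random walk started at v satisfies E_v C ≥ c · n · (log n)². -/
open Finset
open scoped ENNReal

/-- Transition probability of the simple random walk on `G`:
from `x`, move to a uniformly chosen neighbor of `x`. -/
noncomputable def stepProb {V : Type*} [Fintype V] (G : SimpleGraph V)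
    [DecidableRel G.Adj] (x y : V) : ℝ :=
  if G.Adj x y then ((G.degree x : ℝ))⁻¹ else 0

/-- Probability that the walk follows the finite trajectory `f` (given it starts at `f 0`). -/
noncomputable def pathProb {V : Type*} [Fintype V] (G : SimpleGraph V)
    [DecidableRel G.Adj] {k : ℕ} (f : Fin (k + 1) → V) : ℝ :=
  ∏ i : Fin k, stepProb G (f i.castSucc) (f i.succ)

/-- `P_u(T_w > k)`: the probability that the walk started at `u` has not visited `w`
by time `k`.  (This is a cylinder event, so it is a finite sum over trajectories.) -/
noncomputable def hitSurvival {V : Type*} [Fintype V] [DecidableEq V] (G : SimpleGraph V)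
    [DecidableRel G.Adj] (u w : V) (k : ℕ) : ℝ :=
  ∑ f : Fin (k + 1) → V, if f 0 = u ∧ ∀ i, f i ≠ w then pathProb G f else 0

/-- `H(u,w) = E_u T_w`, the expected hitting time of `w` for the simple random walk
started at `u`, via `E[T] = ∑_{k≥0} P(T > k)`. -/
noncomputable def expHit {V : Type*} [Fintype V] [DecidableEq V] (G : SimpleGraph V)
    [DecidableRel G.Adj] (u w : V) : ℝ≥0∞ :=
  ∑' k : ℕ, ENNReal.ofReal (hitSurvival G u w k)

/-- `P_v(C > k)`: the probability that the walk started at `v` has not visited every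
vertex by time `k`, i.e. `max_w T_w > k`. -/
noncomputable def coverSurvival {V : Type*} [Fintype V] [DecidableEq V] (G : SimpleGraph V)
    [DecidableRel G.Adj] (v : V) (k : ℕ) : ℝ :=
  ∑ f : Fin (k + 1) → V, if f 0 = v ∧ ∃ w, ∀ i, f i ≠ w then pathProb G f else 0

/-- `E_v C`, the expected cover time of the simple random walk started at `v`,
via `E[C] = ∑_{k≥0} P(C > k)`. -/
noncomputable def expCover {V : Type*} [Fintype V] [DecidableEq V] (G : SimpleGraph V)
    [DecidableRel G.Adj] (v : V) : ℝ≥0∞ :=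
  ∑' k : ℕ, ENNReal.ofReal (coverSurvival G v k)

/-- `(z, rad)` is a circle packing for `G`: a family of closed round disks
(`C_v` has center `z v` and radius `rad v > 0`) with pairwise disjoint interiors,
such that for `u ≠ v`, `C_u ∩ C_v ≠ ∅` iff `{u,v}` is an edge of `G`. -/
def IsCirclePacking {V : Type*} (G : SimpleGraph V)
    (z : V → EuclideanSpace ℝ (Fin 2)) (rad : V → ℝ) : Prop :=
  (∀ v, 0 < rad v) ∧
  (∀ u v : V, u ≠ v →
    interior (Metric.closedBall (z u) (rad u)) ∩
      interior (Metric.closedBall (z v) (rad v)) = ∅) ∧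
  (∀ u v : V, u ≠ v →
    ((Metric.closedBall (z u) (rad u) ∩ Metric.closedBall (z v) (rad v)).Nonempty ↔ G.Adj u v))

/-- `G` admits a circle packing (equivalently, by Koebe's theorem, `G` is planar). -/
def HasCirclePacking {V : Type*} (G : SimpleGraph V) : Prop :=
  ∃ z rad, IsCirclePacking G z rad

/-!
The proof is Matthews' method applied to vertices at mutual commute time of order `n log n`.

Hitting times, and more generally the expected time to cover a set followed by a terminal reward,
solve Dirichlet problems on the graph, so they are compared through the maximum principle. If
`E_x T_s + g s - g x ≥ r` for all distinct `s`, `x` in `S`, then Matthews' inequality bounds the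
expected time to cover `S`, plus the reward `g` of the last vertex, from below by about
`r * log #S`. With `g = -φ / 2`, where `φ` is the expected hitting time from the stationary
distribution, the condition only concerns the commute times in `S`. The reward is harmless:
Kemeny's identity and Markov's inequality bound `φ` by a multiple of the expected cover time on half
of the vertices.

To find vertices with large commute times, note that `dirichletForm f (hittingTime w)` is determined
by `f w` up to a constant independent of `w`. If any set `A` of more than `b` vertices can be split,
that is, some `f` of bounded energy is `0` on a fixed fraction of `A` and `1` on another, then
projecting along such functions repeatedly yields in every set of more than `b ^ j` vertices one at
commute time at least of order `j * n` from any given vertex. With `j` of order `log n`, a greedy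
choice gives `√n` or more vertices at mutual commute time of order `n log n`.

In a circle packing, splitting functions are Lipschitz cutoffs of the centers around a disk that is
minimal among those centered in `A` and holding a fixed fraction of `A`. Their energy is bounded
because each circle near the disk contributes at most its area, truncated at that scale.
-/

/-! ### The Dirichlet problem on a finite graph -/

section DirichletProblem

variable {V : Type*} [Fintype V] [DecidableEq V] (G : SimpleGraph V) [DecidableRel G.Adj]

/-- The combinatorial Laplacian `(Δf)(x) = ∑_{y ∼ x} (f x - f y)`, as a linear operator. With this
sign and normalization a function `h` satisfies `h x = 1 + (mean of h over the neighbors of x)`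
exactly when `(Δh)(x) = deg x`. -/
noncomputable def graphLaplacian : (V → ℝ) →ₗ[ℝ] V → ℝ :=
  (G.lapMatrix ℝ).mulVecLin

/-- The Dirichlet form `⟪f, g⟫ = ½ ∑_{x ∼ y} (f x - f y) (g x - g y)`, encoded as the bilinear form
of the Laplacian matrix. -/
noncomputable def dirichletForm : LinearMap.BilinForm ℝ (V → ℝ) :=
  Matrix.toLinearMap₂' ℝ (G.lapMatrix ℝ)

lemma graphLaplacian_apply (f : V → ℝ) (x : V) :
    graphLaplacian G f x = G.degree x * f x - ∑ y ∈ G.neighborFinset x, f y :=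
  G.lapMatrix_mulVec_apply x f

lemma graphLaplacian_const (c : ℝ) : graphLaplacian G (fun _ => c) = 0 := by
  ext x
  simp [graphLaplacian_apply]

lemma dirichletForm_apply (f g : V → ℝ) :
    dirichletForm G f g = ∑ x, f x * graphLaplacian G g x :=
  Matrix.toLinearMap₂'_apply' _ _ _

lemma dirichletForm_comm (f g : V → ℝ) : dirichletForm G f g = dirichletForm G g f := by
  have hsymm := G.isSymm_lapMatrix (R := ℝ)
  rw [dirichletForm, Matrix.toLinearMap₂'_apply', Matrix.toLinearMap₂'_apply',
    Matrix.dotProduct_mulVec, ← Matrix.mulVec_transpose, hsymm.eq, dotProduct_comm]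

lemma dirichletForm_self_nonneg (f : V → ℝ) : 0 ≤ dirichletForm G f f := by
  rw [dirichletForm, SimpleGraph.lapMatrix_toLinearMap₂']
  positivity

lemma sum_graphLaplacian (f : V → ℝ) : ∑ x, graphLaplacian G f x = 0 := by
  have h := dirichletForm_comm G (fun _ => 1) f
  simpa [dirichletForm_apply, graphLaplacian_const] using h

lemma dirichletForm_self_le_of_sq_sub_le {f m : V → ℝ}
    (hfm : ∀ x y, G.Adj x y → (f x - f y) ^ 2 ≤ m x + m y) :
    dirichletForm G f f ≤ ∑ x, G.degree x * m x := by
  have hsum : ∑ x, ∑ y, (if G.Adj x y then m x else 0) = ∑ x, G.degree x * m x :=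
    sum_congr rfl fun x _ => by
      rw [G.degree_eq_sum_if_adj (R := ℝ), sum_mul]
      simp only [ite_mul, one_mul, zero_mul]
  have hsum' : ∑ x, ∑ y, (if G.Adj x y then m y else 0) = ∑ x, G.degree x * m x := by
    rw [← hsum, sum_comm]
    simp only [G.adj_comm]
  rw [dirichletForm, SimpleGraph.lapMatrix_toLinearMap₂', div_le_iff₀ two_pos, mul_two]
  nth_rewrite 1 [← hsum]
  rw [← hsum', ← sum_add_distrib]
  refine sum_le_sum fun x _ => ?_
  rw [← sum_add_distrib]
  refine sum_le_sum fun y _ => ?_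
  split_ifs with hxy
  · exact hfm x y hxy
  · simp

lemma dirichletForm_sub_smul_self_le (f h : V → ℝ) {C : ℝ} (hC : 0 < C)
    (hf : dirichletForm G f f ≤ C) :
    dirichletForm G (h - (dirichletForm G f h / C) • f) (h - (dirichletForm G f h / C) • f) ≤
      dirichletForm G h h - dirichletForm G f h ^ 2 / C := by
  set a := dirichletForm G f h
  have hexpand : dirichletForm G (h - (a / C) • f) (h - (a / C) • f) =
      dirichletForm G h h - 2 * (a ^ 2 / C) + (a / C) ^ 2 * dirichletForm G f f := by
    simp only [map_sub, map_smul, LinearMap.sub_apply, LinearMap.smul_apply, smul_eq_mul]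
    rw [dirichletForm_comm G h f]
    ring
  have hquad : (a / C) ^ 2 * dirichletForm G f f ≤ a ^ 2 / C :=
    calc (a / C) ^ 2 * dirichletForm G f f ≤ (a / C) ^ 2 * C := by gcongr
      _ = a ^ 2 / C := by field_simp
  linarith

variable {G}

lemma eq_of_dirichletForm_self_nonpos (hG : G.Connected) {f : V → ℝ}
    (hf : dirichletForm G f f ≤ 0) (x y : V) : f x = f y :=
  (G.lapMatrix_toLinearMap₂'_apply'_eq_zero_iff_forall_reachable f).1
    (hf.antisymm (dirichletForm_self_nonneg G f)) x y (hG x y)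

lemma eq_of_graphLaplacian_eq_zero (hG : G.Connected) {f : V → ℝ} (hf : graphLaplacian G f = 0)
    (x y : V) : f x = f y :=
  G.lapMatrix_mulVec_eq_zero_iff_forall_reachable.1 hf x y (hG x y)

lemma dirichletForm_negPart_posPart_nonpos (f : V → ℝ) : dirichletForm G f⁻ f⁺ ≤ 0 := by
  rw [dirichletForm_apply]
  refine sum_nonpos fun x _ => ?_
  rcases le_total 0 (f x) with hx | hx
  · simp [Pi.negPart_apply, negPart_eq_zero.2 hx]
  · refine mul_nonpos_of_nonneg_of_nonpos (negPart_nonneg (f x)) ?_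
    rw [graphLaplacian_apply, Pi.posPart_apply, posPart_eq_zero.2 hx]
    have : 0 ≤ ∑ y ∈ G.neighborFinset x, f⁺ y := sum_nonneg fun y _ => posPart_nonneg (f y)
    linarith

lemma nonneg_of_graphLaplacian_nonneg (hG : G.Connected) {S : Finset V} (hS : S.Nonempty)
    {f : V → ℝ} (hfS : ∀ x ∈ S, 0 ≤ f x) (hf : ∀ x ∉ S, 0 ≤ graphLaplacian G f x) (x : V) :
    0 ≤ f x := by
  have hneg : ∀ x ∈ S, f⁻ x = 0 := fun x hx => negPart_eq_zero.2 (hfS x hx)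
  have hpair : 0 ≤ dirichletForm G f⁻ f := by
    rw [dirichletForm_apply]
    refine sum_nonneg fun x _ => ?_
    by_cases hx : x ∈ S
    · simp [hneg x hx]
    · exact mul_nonneg (negPart_nonneg (f x)) (hf x hx)
  have henergy : dirichletForm G f⁻ f⁻ ≤ 0 := by
    have hsplit : dirichletForm G f⁻ f = dirichletForm G f⁻ f⁺ - dirichletForm G f⁻ f⁻ := by
      rw [← map_sub, posPart_sub_negPart]
    linarith [dirichletForm_negPart_posPart_nonpos (G := G) f]
  obtain ⟨s, hs⟩ := hS
  have hx : f⁻ x = 0 := (eq_of_dirichletForm_self_nonpos hG henergy x s).trans (hneg s hs)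
  exact negPart_eq_zero.1 hx

variable (G)

/-- The operator of the Dirichlet problem with boundary `S`: `f` itself on `S`, and its Laplacian
off `S`. -/
noncomputable def dirichletOperator (S : Finset V) : (V → ℝ) →ₗ[ℝ] V → ℝ :=
  LinearMap.pi fun x =>
    if x ∈ S then LinearMap.proj x else LinearMap.proj x ∘ₗ graphLaplacian G

/-- The solution `f` of the Dirichlet problem `f = b` on `S`, `Δf = q` off `S`. It is unspecified
when `G` is disconnected or `S` is empty. -/
noncomputable def dirichletSolution (S : Finset V) (b q : V → ℝ) : V → ℝ :=
  Function.invFun (dirichletOperator G S) (S.piecewise b q)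

variable {G}

lemma dirichletOperator_apply_of_mem {S : Finset V} (f : V → ℝ) {x : V} (hx : x ∈ S) :
    dirichletOperator G S f x = f x := by
  simp [dirichletOperator, hx]

lemma dirichletOperator_apply_of_notMem {S : Finset V} (f : V → ℝ) {x : V} (hx : x ∉ S) :
    dirichletOperator G S f x = graphLaplacian G f x := by
  simp [dirichletOperator, hx]

lemma dirichletOperator_injective (hG : G.Connected) {S : Finset V} (hS : S.Nonempty) :
    Function.Injective (dirichletOperator G S) := by
  have hnonneg : ∀ f, dirichletOperator G S f = 0 → ∀ x, 0 ≤ f x := fun f hf =>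
    nonneg_of_graphLaplacian_nonneg hG hS
      (fun x hx => by rw [← dirichletOperator_apply_of_mem (G := G) f hx, hf, Pi.zero_apply])
      (fun x hx => by rw [← dirichletOperator_apply_of_notMem (G := G) f hx, hf, Pi.zero_apply])
  rw [injective_iff_map_eq_zero]
  intro f hf
  ext x
  have hneg := hnonneg (-f) (by rw [map_neg, hf, neg_zero]) x
  exact le_antisymm (neg_nonneg.1 hneg) (hnonneg f hf x)

lemma dirichletOperator_dirichletSolution (hG : G.Connected) {S : Finset V} (hS : S.Nonempty)
    (b q : V → ℝ) : dirichletOperator G S (dirichletSolution G S b q) = S.piecewise b q :=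
  Function.rightInverse_invFun
    (LinearMap.injective_iff_surjective.1 (dirichletOperator_injective hG hS)) _

lemma dirichletSolution_of_mem (hG : G.Connected) {S : Finset V} (b q : V → ℝ) {x : V}
    (hx : x ∈ S) : dirichletSolution G S b q x = b x := by
  rw [← dirichletOperator_apply_of_mem (G := G) (dirichletSolution G S b q) hx,
    dirichletOperator_dirichletSolution hG ⟨x, hx⟩, piecewise_eq_of_mem _ _ _ hx]

lemma graphLaplacian_dirichletSolution (hG : G.Connected) {S : Finset V} (hS : S.Nonempty)
    (b q : V → ℝ) {x : V} (hx : x ∉ S) : graphLaplacian G (dirichletSolution G S b q) x = q x := by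
  rw [← dirichletOperator_apply_of_notMem (dirichletSolution G S b q) hx,
    dirichletOperator_dirichletSolution hG hS, piecewise_eq_of_notMem _ _ _ hx]

lemma eq_of_graphLaplacian_eq (hG : G.Connected) {S : Finset V} (hS : S.Nonempty) {f g : V → ℝ}
    (hfgS : ∀ x ∈ S, f x = g x) (hfg : ∀ x ∉ S, graphLaplacian G f x = graphLaplacian G g x) :
    f = g := by
  apply dirichletOperator_injective hG hS
  ext x
  by_cases hx : x ∈ S
  · simpa only [dirichletOperator_apply_of_mem _ hx] using hfgS x hx
  · simpa only [dirichletOperator_apply_of_notMem _ hx] using hfg x hx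

end DirichletProblem

/-! ### Hitting times -/

section HittingTime

variable {V : Type*} [Fintype V] [DecidableEq V] (G : SimpleGraph V) [DecidableRel G.Adj]

/-- The degree sum `∑ x, deg x`, that is `2 |E|`, as a real number. -/
def degreeSum : ℝ := ∑ x, (G.degree x : ℝ)

/-- The expected hitting time `x ↦ E_x T_w`, encoded as the solution of the Dirichlet problem that
the first step of the walk yields. -/
noncomputable def hittingTime (w : V) : V → ℝ :=
  dirichletSolution G {w} 0 fun x => G.degree x

/-- The expected commute time `E_u T_w + E_w T_u`. -/
noncomputable def commuteTime (u w : V) : ℝ :=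
  hittingTime G w u + hittingTime G u w

/-- The expected hitting time of `w` from the stationary distribution `deg x / ∑ y, deg y`. -/
noncomputable def stationaryHittingTime (w : V) : ℝ :=
  (∑ x, G.degree x * hittingTime G w x) / degreeSum G

lemma commuteTime_comm (u w : V) : commuteTime G u w = commuteTime G w u :=
  add_comm _ _

variable {G}

lemma hittingTime_self (hG : G.Connected) (w : V) : hittingTime G w w = 0 :=
  dirichletSolution_of_mem hG _ _ (mem_singleton_self w)

lemma commuteTime_self (hG : G.Connected) (w : V) : commuteTime G w w = 0 := by
  rw [commuteTime, hittingTime_self hG, add_zero]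

lemma graphLaplacian_hittingTime_of_ne (hG : G.Connected) {w x : V} (hxw : x ≠ w) :
    graphLaplacian G (hittingTime G w) x = G.degree x :=
  graphLaplacian_dirichletSolution hG (singleton_nonempty w) _ _ (notMem_singleton.2 hxw)

lemma graphLaplacian_hittingTime (hG : G.Connected) (w x : V) :
    graphLaplacian G (hittingTime G w) x = G.degree x - if x = w then degreeSum G else 0 := by
  split_ifs with hxw
  · subst hxw
    have hsum := sum_graphLaplacian G (hittingTime G x)
    have hdeg : degreeSum G = G.degree x + ∑ y ∈ univ.erase x, (G.degree y : ℝ) :=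
      (add_sum_erase _ _ (mem_univ x)).symm
    rw [← add_sum_erase _ _ (mem_univ x), sum_congr rfl fun y hy =>
      graphLaplacian_hittingTime_of_ne hG (ne_of_mem_erase hy)] at hsum
    linarith
  · rw [graphLaplacian_hittingTime_of_ne hG hxw, sub_zero]

lemma hittingTime_nonneg (hG : G.Connected) (w x : V) : 0 ≤ hittingTime G w x := by
  refine nonneg_of_graphLaplacian_nonneg hG (singleton_nonempty w) (fun y hy => ?_)
    (fun y hy => ?_) x
  · rw [mem_singleton.1 hy, hittingTime_self hG]
  · rw [graphLaplacian_hittingTime_of_ne hG (notMem_singleton.1 hy)]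
    positivity

lemma stationaryHittingTime_nonneg (hG : G.Connected) (w : V) :
    0 ≤ stationaryHittingTime G w :=
  div_nonneg (sum_nonneg fun x _ => mul_nonneg (Nat.cast_nonneg _) (hittingTime_nonneg hG w x))
    (sum_nonneg fun _ _ => Nat.cast_nonneg _)

lemma dirichletForm_hittingTime (hG : G.Connected) (f : V → ℝ) (w : V) :
    dirichletForm G f (hittingTime G w) = (∑ x, G.degree x * f x) - degreeSum G * f w := by
  simp only [dirichletForm_apply, graphLaplacian_hittingTime hG, mul_sub, sum_sub_distrib]
  simp [mul_comm]

lemma dirichletForm_hittingTime_sub_self (hG : G.Connected) (u w : V) :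
    dirichletForm G (hittingTime G u - hittingTime G w) (hittingTime G u - hittingTime G w) =
      degreeSum G * commuteTime G u w := by
  have hcomm := dirichletForm_comm G (hittingTime G u) (hittingTime G w)
  simp only [map_sub, LinearMap.sub_apply, dirichletForm_hittingTime hG, hittingTime_self hG,
    commuteTime] at hcomm ⊢
  linarith

lemma hittingTime_sub_hittingTime (hG : G.Connected) (hpos : 0 < degreeSum G) (u w : V) :
    hittingTime G w u - hittingTime G u w =
      stationaryHittingTime G w - stationaryHittingTime G u := by
  have hcomm := dirichletForm_comm G (hittingTime G u) (hittingTime G w)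
  rw [dirichletForm_hittingTime hG, dirichletForm_hittingTime hG] at hcomm
  rw [stationaryHittingTime, stationaryHittingTime]
  field_simp
  linarith

/-- This is Kemeny's constant; it is constant because it is harmonic in the starting point. -/
lemma sum_degree_mul_hittingTime_eq (hG : G.Connected) (x y : V) :
    ∑ w, G.degree w * hittingTime G w x = ∑ w, G.degree w * hittingTime G w y := by
  have hharmonic : graphLaplacian G (∑ w, (G.degree w : ℝ) • hittingTime G w) = 0 := by
    ext z
    simp only [map_sum, map_smul, Finset.sum_apply, Pi.smul_apply, smul_eq_mul,
      graphLaplacian_hittingTime hG, mul_sub, sum_sub_distrib, mul_ite, mul_zero, sum_ite_eq,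
      mem_univ, if_true, ← sum_mul, Pi.zero_apply, degreeSum]
    ring
  simpa using eq_of_graphLaplacian_eq_zero hG hharmonic x y

lemma sum_degree_mul_stationaryHittingTime (hG : G.Connected) (hpos : 0 < degreeSum G) (v : V) :
    ∑ w, G.degree w * stationaryHittingTime G w = ∑ w, G.degree w * hittingTime G w v := by
  calc ∑ w, G.degree w * stationaryHittingTime G w
      = (∑ x, G.degree x * ∑ w, G.degree w * hittingTime G w x) / degreeSum G := by
        simp only [stationaryHittingTime, mul_div_assoc', mul_sum, ← sum_div]
        rw [sum_comm]
        simp only [mul_left_comm]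
    _ = (∑ x, G.degree x * ∑ w, G.degree w * hittingTime G w v) / degreeSum G := by
        simp only [sum_degree_mul_hittingTime_eq hG _ v]
    _ = ∑ w, G.degree w * hittingTime G w v := by
        rw [← sum_mul, ← degreeSum, mul_div_cancel_left₀ _ hpos.ne']

end HittingTime

/-! ### Matthews' method -/

section CoverValue

variable {V : Type*} [Fintype V] [DecidableEq V] (G : SimpleGraph V) [DecidableRel G.Adj]

/-- The value `x ↦ E_x[C_S + g (X_{C_S})]`, where `C_S` is the first time at which the walk has
visited all of `S`: up to its first visit to `S` the walk pays one per step, and from then on only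
the rest of `S` remains to be covered. The terminal reward `g` is what makes a lower bound on
`E_x T_s + g s` usable at the vertex `s` that is visited last. -/
noncomputable def coverValue (g : V → ℝ) (S : Finset V) : V → ℝ :=
  if S = ∅ then g else
    dirichletSolution G S (fun x => if x ∈ S then coverValue g (S.erase x) x else 0)
      fun x => G.degree x
termination_by #S
decreasing_by exact card_erase_lt_of_mem ‹_›

variable {G}

lemma coverValue_empty (g : V → ℝ) : coverValue G g ∅ = g := by
  rw [coverValue, if_pos rfl]

lemma coverValue_erase (hG : G.Connected) (g : V → ℝ) (S : Finset V) (x : V) :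
    coverValue G g (S.erase x) x = coverValue G g S x := by
  by_cases hx : x ∈ S
  · rw [coverValue.eq_def G g S, if_neg (ne_empty_of_mem hx), dirichletSolution_of_mem hG _ _ hx,
      if_pos hx]
  · rw [erase_eq_of_notMem hx]

lemma graphLaplacian_coverValue (hG : G.Connected) (g : V → ℝ) {S : Finset V} (hS : S.Nonempty)
    {x : V} (hx : x ∉ S) : graphLaplacian G (coverValue G g S) x = G.degree x := by
  rw [coverValue, if_neg hS.ne_empty, graphLaplacian_dirichletSolution hG hS _ _ hx]

lemma coverValue_singleton (hG : G.Connected) (g : V → ℝ) (s x : V) :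
    coverValue G g {s} x = hittingTime G s x + g s := by
  have heq : coverValue G g {s} = hittingTime G s + fun _ => g s := by
    refine eq_of_graphLaplacian_eq hG (singleton_nonempty s) (fun y hy => ?_) (fun y hy => ?_)
    · rw [mem_singleton.1 hy, ← coverValue_erase hG, erase_singleton, coverValue_empty,
        Pi.add_apply, hittingTime_self hG, zero_add]
    · rw [graphLaplacian_coverValue hG g (singleton_nonempty s) hy, map_add, graphLaplacian_const,
        add_zero, graphLaplacian_hittingTime_of_ne hG (notMem_singleton.1 hy)]
  rw [heq, Pi.add_apply]

/-- It suffices to prove Matthews' inequality on `S`: off `S` both sides have the same Laplacian. -/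
lemma sum_coverValue_erase_add_le_of_forall_mem (hG : G.Connected) {g : V → ℝ} {S : Finset V}
    (hS : S.Nontrivial) {r : ℝ}
    (h : ∀ x ∈ S, ∑ s ∈ S, coverValue G g (S.erase s) x + r ≤ #S * coverValue G g S x) (x : V) :
    ∑ s ∈ S, coverValue G g (S.erase s) x + r ≤ #S * coverValue G g S x := by
  let f : V → ℝ :=
    (#S : ℝ) • coverValue G g S - ∑ s ∈ S, coverValue G g (S.erase s) - fun _ => r
  have hf (y : V) :
      f y = #S * coverValue G g S y - ∑ s ∈ S, coverValue G g (S.erase s) y - r := by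
    simp [f]
  suffices 0 ≤ f x by linarith [hf x]
  refine nonneg_of_graphLaplacian_nonneg hG hS.nonempty (fun y hy => ?_) (fun y hy => ?_) x
  · linarith [hf y, h y hy]
  · have herase : ∀ s ∈ S, graphLaplacian G (coverValue G g (S.erase s)) y = G.degree y :=
      fun s _ => graphLaplacian_coverValue hG g hS.erase_nonempty
        fun hys => hy (mem_of_mem_erase hys)
    simp only [f, map_sub, map_smul, map_sum, graphLaplacian_const, Pi.sub_apply, Pi.smul_apply,
      Finset.sum_apply, smul_eq_mul, Pi.zero_apply, sum_congr rfl herase, sum_const,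
      nsmul_eq_mul, graphLaplacian_coverValue hG g hS.nonempty hy, sub_self, le_refl]

/-- Matthews' inequality. In probabilistic terms, if `s` is uniform in `S` and independent of the
walk then with probability `1 / #S` it is the last vertex of `S` to be visited, in which case
covering `S` takes an additional `E_x T_s` after `S.erase s` has been covered at `x`. -/
lemma sum_coverValue_erase_add_le (hG : G.Connected) {g : V → ℝ} {r : ℝ} {S : Finset V}
    (hS : S.Nontrivial)
    (hr : ∀ s ∈ S, ∀ x ∈ S, s ≠ x → r + g x ≤ hittingTime G s x + g s) (x : V) :
    ∑ s ∈ S, coverValue G g (S.erase s) x + r ≤ #S * coverValue G g S x := by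
  induction S using Finset.strongInduction generalizing x with
  | H S ih =>
    refine sum_coverValue_erase_add_le_of_forall_mem hG hS (fun x hx => ?_) x
    have hcard : (#S : ℝ) = #(S.erase x) + 1 := by
      exact_mod_cast (card_erase_add_one hx).symm
    have hsum : ∑ s ∈ S, coverValue G g (S.erase s) x =
        coverValue G g S x + ∑ s ∈ S.erase x, coverValue G g ((S.erase x).erase s) x := by
      rw [← add_sum_erase _ _ hx, coverValue_erase hG]
      congr 1
      refine sum_congr rfl fun s _ => ?_
      rw [erase_right_comm, coverValue_erase hG]
    suffices hstep : ∑ s ∈ S.erase x, coverValue G g ((S.erase x).erase s) x + r ≤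
        #(S.erase x) * coverValue G g (S.erase x) x by
      rw [coverValue_erase hG] at hstep
      rw [hsum, hcard]
      linarith
    obtain ⟨s, hs⟩ | htriv := hS.erase_nonempty.exists_eq_singleton_or_nontrivial
    · have hsmem : s ∈ S.erase x := hs ▸ mem_singleton_self s
      have := hr s (mem_of_mem_erase hsmem) x hx (ne_of_mem_erase hsmem)
      simp only [hs, sum_singleton, erase_singleton, card_singleton, coverValue_empty,
        coverValue_singleton hG, Nat.cast_one, one_mul]
      linarith
    · exact ih _ (erase_ssubset hx) htriv
        (fun s hs y hy => hr s (mem_of_mem_erase hs) y (mem_of_mem_erase hy)) x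

lemma mul_harmonic_sub_one_add_le_coverValue (hG : G.Connected) {g : V → ℝ} {r m : ℝ}
    {S : Finset V} (hS : S.Nonempty) (hm : ∀ s ∈ S, m ≤ g s)
    (hr : ∀ s ∈ S, ∀ x ∈ S, s ≠ x → r + g x ≤ hittingTime G s x + g s) (x : V) :
    r * (harmonic #S - 1) + m ≤ coverValue G g S x := by
  induction S using Finset.strongInduction generalizing x with
  | H S ih =>
    obtain ⟨s, rfl⟩ | htriv := hS.exists_eq_singleton_or_nontrivial
    · have := hm s (mem_singleton_self s)
      have := hittingTime_nonneg hG s x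
      rw [coverValue_singleton hG, card_singleton]
      norm_num [harmonic]
      linarith
    · obtain ⟨N, hN⟩ : ∃ N, #S = N + 1 := Nat.exists_eq_succ_of_ne_zero hS.card_pos.ne'
      have herase : ∀ s ∈ S, r * (harmonic N - 1) + m ≤ coverValue G g (S.erase s) x := by
        intro s hs
        have := ih _ (erase_ssubset hs) htriv.erase_nonempty
          (fun y hy => hm y (mem_of_mem_erase hy))
          (fun y hy z hz => hr y (mem_of_mem_erase hy) z (mem_of_mem_erase hz)) x
        rwa [card_erase_of_mem hs, hN, Nat.add_sub_cancel] at this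
      have hstep := sum_coverValue_erase_add_le hG htriv hr x
      have hsum := card_nsmul_le_sum S _ _ herase
      rw [nsmul_eq_mul] at hsum
      have hharmonic : #S * (r * (harmonic #S - 1) + m) =
          #S * (r * (harmonic N - 1) + m) + r := by
        rw [hN, harmonic_succ]
        push_cast
        field_simp
        ring
      have hpos : (0 : ℝ) < #S := by exact_mod_cast hS.card_pos
      refine le_of_mul_le_mul_left ?_ hpos
      linarith

lemma coverValue_eq_one_add (hG : G.Connected) (g : V → ℝ) {S : Finset V} (hS : S.Nonempty) {x : V}
    (hx : x ∉ S) :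
    coverValue G g S x = 1 + ∑ y, stepProb G x y * coverValue G g S y := by
  obtain ⟨s, hs⟩ := hS
  have : Nontrivial V := ⟨s, x, ne_of_mem_of_not_mem hs hx⟩
  have hdeg : (0 : ℝ) < G.degree x := by
    exact_mod_cast hG.preconnected.degree_pos_of_nontrivial x
  have hlap := graphLaplacian_coverValue hG g ⟨s, hs⟩ hx
  have hsum : ∑ y, stepProb G x y * coverValue G g S y =
      (G.degree x : ℝ)⁻¹ * ∑ y ∈ G.neighborFinset x, coverValue G g S y := by
    rw [SimpleGraph.neighborFinset_eq_filter, sum_filter, mul_sum]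
    simp only [stepProb, ite_mul, zero_mul, mul_ite, mul_zero]
  rw [graphLaplacian_apply, sub_eq_iff_eq_add] at hlap
  rw [hsum]
  field_simp
  rwa [mul_comm]

end CoverValue

/-! ### The expected cover time -/

section ExpCover

variable {V : Type*} [Fintype V] (G : SimpleGraph V) [DecidableRel G.Adj]

lemma stepProb_nonneg (x y : V) : 0 ≤ stepProb G x y := by
  unfold stepProb
  split_ifs <;> positivity

lemma pathProb_nonneg {k : ℕ} (f : Fin (k + 1) → V) : 0 ≤ pathProb G f :=
  prod_nonneg fun _ _ => stepProb_nonneg G _ _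

lemma pathProb_cons {k : ℕ} (x : V) (f : Fin (k + 1) → V) :
    pathProb G (Fin.cons x f : Fin (k + 2) → V) = stepProb G x (f 0) * pathProb G f := by
  rw [pathProb, Fin.prod_univ_succ]
  simp [pathProb]

variable [DecidableEq V]

/-- `P_x(C_S > k)`: the probability that the walk from `x` has not visited all of `S` by time `k`,
in the same encoding as `coverSurvival`. -/
noncomputable def uncoveredProb (S : Finset V) (x : V) (k : ℕ) : ℝ :=
  ∑ f : Fin (k + 1) → V, if f 0 = x ∧ ∃ w ∈ S, ∀ i, f i ≠ w then pathProb G f else 0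

lemma uncoveredProb_nonneg (S : Finset V) (x : V) (k : ℕ) : 0 ≤ uncoveredProb G S x k :=
  sum_nonneg fun f _ => ite_nonneg (pathProb_nonneg G f) le_rfl

lemma uncoveredProb_le_coverSurvival (S : Finset V) (x : V) (k : ℕ) :
    uncoveredProb G S x k ≤ coverSurvival G x k := by
  refine sum_le_sum fun f _ => ?_
  split_ifs with hS huniv
  · rfl
  · exact absurd ⟨hS.1, hS.2.imp fun w hw => hw.2⟩ huniv
  · exact pathProb_nonneg G f
  · rfl

lemma coverSurvival_nonneg (x : V) (k : ℕ) : 0 ≤ coverSurvival G x k :=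
  (uncoveredProb_nonneg G ∅ x k).trans (uncoveredProb_le_coverSurvival G ∅ x k)

lemma uncoveredProb_zero (S : Finset V) (x : V) :
    uncoveredProb G S x 0 = if (S.erase x).Nonempty then 1 else 0 := by
  have herase : (∃ w ∈ S, ¬x = w) ↔ (S.erase x).Nonempty := by
    simp only [Finset.Nonempty, mem_erase]
    grind
  rw [uncoveredProb, ← (Equiv.funUnique (Fin 1) V).symm.sum_comp]
  simp [pathProb, herase, ite_and]

lemma uncoveredProb_succ (S : Finset V) (x : V) (k : ℕ) :
    uncoveredProb G S x (k + 1) = ∑ y, stepProb G x y * uncoveredProb G (S.erase x) y k := by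
  have hcons (f : Fin (k + 1) → V) :
      (∃ w ∈ S, ∀ i, (Fin.cons x f : Fin (k + 2) → V) i ≠ w) ↔
        ∃ w ∈ S.erase x, ∀ i, f i ≠ w := by
    simp only [Fin.forall_fin_succ (n := k + 1), Fin.cons_zero, Fin.cons_succ, mem_erase]
    grind
  calc uncoveredProb G S x (k + 1)
      = ∑ f : Fin (k + 1) → V, if ∃ w ∈ S.erase x, ∀ i, f i ≠ w then
          stepProb G x (f 0) * pathProb G f else 0 := by
        rw [uncoveredProb, ← (Fin.consEquiv fun _ => V).sum_comp, Fintype.sum_prod_type]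
        rw [sum_eq_single_of_mem x (mem_univ x)]
        · simp [Fin.consEquiv, hcons, pathProb_cons]
        · intro y _ hy
          simp [Fin.consEquiv, hy]
    _ = ∑ y, stepProb G x y * uncoveredProb G (S.erase x) y k := by
        simp only [uncoveredProb, mul_sum]
        rw [sum_comm]
        refine sum_congr rfl fun f _ => ?_
        simp [ite_and]

variable {G}

lemma coverValue_le_sum_uncoveredProb_add (hG : G.Connected) {g : V → ℝ} (hg : ∀ x, g x ≤ 0)
    {B : ℝ} (hB₀ : 0 ≤ B) (hB : ∀ S x, coverValue G g S x ≤ B) (K : ℕ) (S : Finset V) (x : V) :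
    coverValue G g S x ≤ ∑ k ∈ range K, uncoveredProb G S x k + B * uncoveredProb G S x K := by
  induction K generalizing S x with
  | zero =>
    obtain hSx | hSx := (S.erase x).eq_empty_or_nonempty
    · simpa [uncoveredProb_zero, ← coverValue_erase hG g S, hSx, coverValue_empty] using hg x
    · simpa [uncoveredProb_zero, hSx] using hB S x
  | succ K ih =>
    obtain hSx | hSx := (S.erase x).eq_empty_or_nonempty
    · calc coverValue G g S x = g x := by rw [← coverValue_erase hG, hSx, coverValue_empty]
        _ ≤ 0 := hg x
        _ ≤ _ := add_nonneg (sum_nonneg fun k _ => uncoveredProb_nonneg G S x k)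
            (mul_nonneg hB₀ (uncoveredProb_nonneg G S x (K + 1)))
    · calc coverValue G g S x
          = ∑ y, stepProb G x y * coverValue G g (S.erase x) y + 1 := by
            rw [← coverValue_erase hG, coverValue_eq_one_add hG g hSx (notMem_erase x S), add_comm]
        _ ≤ ∑ y, stepProb G x y * (∑ k ∈ range K, uncoveredProb G (S.erase x) y k +
              B * uncoveredProb G (S.erase x) y K) + 1 := by
            gcongr with y
            · exact stepProb_nonneg G x y
            · exact ih _ y
        _ = _ := by
            simp only [sum_range_succ', uncoveredProb_zero, if_pos hSx, uncoveredProb_succ,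
              mul_add, sum_add_distrib, mul_sum, mul_left_comm B]
            rw [sum_comm]
            ring

/-- The error term `B * P(C_S > K)` of the truncation vanishes as `K → ∞` because `expCover` is a
convergent series, so no quantitative decay of the survival probabilities is needed. -/
lemma ofReal_coverValue_le_expCover (hG : G.Connected) {g : V → ℝ} (hg : ∀ x, g x ≤ 0)
    (S : Finset V) (x : V) : ENNReal.ofReal (coverValue G g S x) ≤ expCover G x := by
  obtain htop | htop := eq_or_ne (expCover G x) ⊤
  · simp [htop]
  have hsum : Summable (coverSurvival G x) := (ENNReal.summable_toReal htop).congr fun k =>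
    ENNReal.toReal_ofReal (coverSurvival_nonneg G x k)
  rw [expCover, ← ENNReal.ofReal_tsum_of_nonneg (coverSurvival_nonneg G x) hsum]
  apply ENNReal.ofReal_le_ofReal
  obtain ⟨B, hB⟩ := (Set.finite_range (fun p : Finset V × V => coverValue G g p.1 p.2)).bddAbove
  have hlim : Filter.Tendsto (fun K => ∑' k, coverSurvival G x k + max B 0 * coverSurvival G x K)
      Filter.atTop (nhds (∑' k, coverSurvival G x k)) := by
    simpa using (hsum.tendsto_atTop_zero.const_mul (max B 0)).const_add (∑' k, coverSurvival G x k)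
  refine ge_of_tendsto' hlim fun K => ?_
  calc coverValue G g S x
      ≤ ∑ k ∈ range K, uncoveredProb G S x k + max B 0 * uncoveredProb G S x K :=
        coverValue_le_sum_uncoveredProb_add hG hg (le_max_right B 0)
          (fun S x => (hB ⟨(S, x), rfl⟩).trans (le_max_left B 0)) K S x
    _ ≤ ∑ k ∈ range K, coverSurvival G x k + max B 0 * coverSurvival G x K := by
        gcongr <;> exact uncoveredProb_le_coverSurvival G S x _
    _ ≤ ∑' k, coverSurvival G x k + max B 0 * coverSurvival G x K := by
        gcongr
        exact hsum.sum_le_tsum _ fun k _ => coverSurvival_nonneg G x k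

lemma ofReal_hittingTime_le_expCover (hG : G.Connected) (w x : V) :
    ENNReal.ofReal (hittingTime G w x) ≤ expCover G x := by
  simpa [coverValue_singleton hG] using
    ofReal_coverValue_le_expCover hG (g := 0) (fun _ => le_rfl) {w} x

lemma one_le_expCover [Nontrivial V] (x : V) : 1 ≤ expCover G x := by
  have hone : 1 ≤ coverSurvival G x 0 := by
    refine le_of_eq_of_le ?_ (uncoveredProb_le_coverSurvival G univ x 0)
    rw [uncoveredProb_zero, if_pos (univ_nontrivial.erase_nonempty)]
  calc (1 : ℝ≥0∞) ≤ ENNReal.ofReal (coverSurvival G x 0) := by simpa using hone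
    _ ≤ expCover G x := ENNReal.le_tsum (f := fun k => ENNReal.ofReal (coverSurvival G x k)) 0

end ExpCover

/-! ### Well-separated sets -/

lemma exists_pairwise_subset_card_le_mul {α : Type*} {r : α → α → Prop}
    [DecidableRel r] (hirrefl : ∀ a, ¬r a a) (hsymm : ∀ a b, r a b → r b a) {N : ℕ} {A : Finset α}
    (hN : ∀ a ∈ A, #{b ∈ A | ¬r b a} ≤ N) :
    ∃ W ⊆ A, (W : Set α).Pairwise r ∧ #A ≤ #W * N := by
  classical
  induction A using Finset.strongInduction with
  | H A ih =>
    obtain rfl | ⟨a, ha⟩ := A.eq_empty_or_nonempty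
    · exact ⟨∅, by simp⟩
    have hssub : {b ∈ A | r b a} ⊂ A := filter_ssubset.2 ⟨a, ha, hirrefl a⟩
    obtain ⟨W, hWA, hW, hcard⟩ := ih _ hssub fun b hb =>
      (card_le_card (filter_subset_filter _ hssub.subset)).trans (hN b (hssub.subset hb))
    have hWr (b) (hb : b ∈ W) : r b a := (mem_filter.1 (hWA hb)).2
    refine ⟨insert a W, insert_subset ha (hWA.trans hssub.subset), ?_, ?_⟩
    · rw [coe_insert]
      exact hW.insert fun b hb _ => ⟨hsymm b a (hWr b hb), hWr b hb⟩
    · rw [card_insert_of_notMem fun haW => hirrefl a (hWr a haW),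
        ← card_filter_add_card_filter_not (s := A) fun b => r b a, add_one_mul]
      exact add_le_add hcard (hN a ha)

section EnergySplits

variable {V : Type*} [Fintype V] [DecidableEq V] (G : SimpleGraph V) [DecidableRel G.Adj]

/-- Any set of more than `b` vertices is split in two by a function of energy at most `C`, in the
sense that the function vanishes on a `1 / b` fraction of the set and is `1` on another. For bounded
degree this is all that the lower bound on the cover time uses about circle packings. -/
def EnergySplits (b : ℕ) (C : ℝ) : Prop :=
  ∀ A : Finset V, b < #A → ∃ f : V → ℝ, dirichletForm G f f ≤ C ∧
    #A ≤ b * #{x ∈ A | f x = 0} ∧ #A ≤ b * #{x ∈ A | f x = 1}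

variable {G}

/-- A splitting `f` of `A` takes different values `0` and `1` on two large parts of `A`, so the
component of `hittingTime G u - c` along `f` is large for `u` in one of the two parts; there, the
energy gains the square of this component, and the rest is gained inside the part. -/
lemma exists_le_dirichletForm_hittingTime_sub (hG : G.Connected) {b : ℕ} {C : ℝ} (hC : 0 < C)
    (hsplit : EnergySplits G b C) {j : ℕ} {A : Finset V} (hA : b ^ j < #A) (c : V → ℝ) :
    ∃ u ∈ A, j * (degreeSum G ^ 2 / (4 * C)) ≤
      dirichletForm G (hittingTime G u - c) (hittingTime G u - c) := by
  induction j generalizing A c with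
  | zero =>
    obtain ⟨u, hu⟩ := card_pos.1 (Nat.zero_lt_of_lt hA)
    exact ⟨u, hu, by simpa using dirichletForm_self_nonneg G (hittingTime G u - c)⟩
  | succ j ih =>
    obtain ⟨f, hfC, hf₀, hf₁⟩ := hsplit A ((Nat.le_self_pow j.succ_ne_zero b).trans_lt hA)
    set t := ∑ x, G.degree x * f x - dirichletForm G f c with ht
    have hcomponent (u : V) :
        dirichletForm G f (hittingTime G u - c) = t - degreeSum G * f u := by
      rw [map_sub, dirichletForm_hittingTime hG, ht]
      ring
    obtain ⟨i, hi, hfar⟩ : ∃ i : ℝ, #A ≤ b * #{x ∈ A | f x = i} ∧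
        degreeSum G ^ 2 / 4 ≤ (t - degreeSum G * i) ^ 2 := by
      by_cases h : degreeSum G ^ 2 / 4 ≤ (t - degreeSum G * 0) ^ 2
      · exact ⟨0, hf₀, h⟩
      · exact ⟨1, hf₁, by nlinarith [sq_nonneg (t - degreeSum G / 2)]⟩
    have hpart : b ^ j < #{x ∈ A | f x = i} :=
      lt_of_mul_lt_mul_left (a := b) (by rw [← pow_succ']; exact hA.trans_le hi) (Nat.zero_le b)
    obtain ⟨u, hu, hju⟩ := ih hpart (c + ((t - degreeSum G * i) / C) • f)
    obtain ⟨huA, hui⟩ := mem_filter.1 hu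
    refine ⟨u, huA, ?_⟩
    have hgain := dirichletForm_sub_smul_self_le G f (hittingTime G u - c) hC hfC
    rw [hcomponent, hui, sub_sub] at hgain
    have hsq : degreeSum G ^ 2 / (4 * C) ≤ (t - degreeSum G * i) ^ 2 / C := by
      rw [← div_div]
      gcongr
    push_cast
    linarith

lemma exists_pairwise_le_commuteTime (hG : G.Connected) (hpos : 0 < degreeSum G) {b : ℕ} {C : ℝ}
    (hC : 0 < C) (hsplit : EnergySplits G b C) {j : ℕ} (hj : j ≠ 0) (A : Finset V) :
    ∃ W ⊆ A, (W : Set V).Pairwise (fun u w => j * (degreeSum G / (4 * C)) ≤ commuteTime G u w) ∧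
      #A ≤ #W * b ^ j := by
  refine exists_pairwise_subset_card_le_mul (fun u => ?_) (fun u w h => ?_) fun w _ => ?_
  · rw [commuteTime_self hG, not_le]
    positivity
  · rwa [commuteTime_comm]
  · by_contra! hlarge
    obtain ⟨u, hu, hfar⟩ :=
      exists_le_dirichletForm_hittingTime_sub hG hC hsplit hlarge (hittingTime G w)
    rw [dirichletForm_hittingTime_sub_self hG] at hfar
    refine (mem_filter.1 hu).2.not_ge (le_of_mul_le_mul_left (hfar.trans' (le_of_eq ?_)) hpos)
    ring

end EnergySplits

/-! ### The lower bound -/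

section LowerBound

variable {V : Type*} [Fintype V] {G : SimpleGraph V} [DecidableRel G.Adj]

lemma one_le_degree [Nontrivial V] (hG : G.Connected) (x : V) : (1 : ℝ) ≤ G.degree x := by
  exact_mod_cast hG.preconnected.degree_pos_of_nontrivial x

lemma card_le_degreeSum [Nontrivial V] (hG : G.Connected) : (Fintype.card V : ℝ) ≤ degreeSum G := by
  simpa [degreeSum] using sum_le_sum fun x (_ : x ∈ univ) => one_le_degree hG x

variable [DecidableEq V]

lemma card_le_two_mul_card_stationaryHittingTime_le [Nontrivial V] (hG : G.Connected) {M : ℝ}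
    (hM : ∀ x, G.degree x ≤ M) {v : V} {t : ℝ} (ht : 0 < t) (hv : ∀ w, hittingTime G w v ≤ t) :
    Fintype.card V ≤ 2 * #{w | stationaryHittingTime G w ≤ 2 * M * t} := by
  have hpos : 0 < degreeSum G := (Nat.cast_pos.2 Fintype.card_pos).trans_le (card_le_degreeSum hG)
  have hM₀ : 0 < M := (one_le_degree hG v).trans (hM v) |>.trans_lt' one_pos
  have hsum : ∑ w, stationaryHittingTime G w ≤ Fintype.card V * (M * t) :=
    calc ∑ w, stationaryHittingTime G w
        ≤ ∑ w, G.degree w * stationaryHittingTime G w := sum_le_sum fun w _ =>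
          le_mul_of_one_le_left (stationaryHittingTime_nonneg hG w) (one_le_degree hG w)
      _ = ∑ w, G.degree w * hittingTime G w v := sum_degree_mul_stationaryHittingTime hG hpos v
      _ ≤ ∑ _w : V, M * t := sum_le_sum fun w _ =>
          mul_le_mul (hM w) (hv w) (hittingTime_nonneg hG w v) hM₀.le
      _ = Fintype.card V * (M * t) := by simp
  have hmarkov : #{w | ¬stationaryHittingTime G w ≤ 2 * M * t} * (2 * M * t) ≤
      ∑ w, stationaryHittingTime G w :=
    calc #{w | ¬stationaryHittingTime G w ≤ 2 * M * t} * (2 * M * t)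
        ≤ ∑ w with ¬stationaryHittingTime G w ≤ 2 * M * t, stationaryHittingTime G w := by
          rw [← nsmul_eq_mul]
          exact card_nsmul_le_sum _ _ _ fun w hw => (not_le.1 (mem_filter.1 hw).2).le
      _ ≤ ∑ w, stationaryHittingTime G w :=
          sum_le_sum_of_subset_of_nonneg (filter_subset _ _) fun w _ _ =>
            stationaryHittingTime_nonneg hG w
  have hbad : 2 * #{w | ¬stationaryHittingTime G w ≤ 2 * M * t} ≤ Fintype.card V := by
    have : (2 * #{w | ¬stationaryHittingTime G w ≤ 2 * M * t} : ℝ) ≤ Fintype.card V :=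
      le_of_mul_le_mul_right (by linarith) (mul_pos hM₀ ht)
    exact_mod_cast this
  have hsplit := card_filter_add_card_filter_not (s := univ)
    fun w => stationaryHittingTime G w ≤ 2 * M * t
  rw [card_univ] at hsplit
  lia

/-- Matthews' method needs a lower bound on `E_x T_s` for all `s` and `x` in a set, whereas
separation only bounds the commute times. The reward `-φ / 2`, where `φ` is the hitting time from
stationarity, makes up for the difference because `2 E_x T_s = commuteTime s x + φ s - φ x`. -/
lemma mul_harmonic_sub_one_sub_le_coverValue (hG : G.Connected) (hpos : 0 < degreeSum G)
    {W : Finset V} (hW : W.Nonempty) {r q : ℝ}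
    (hr : (W : Set V).Pairwise fun u w => 2 * r ≤ commuteTime G u w)
    (hq : ∀ w ∈ W, stationaryHittingTime G w ≤ 2 * q) (x : V) :
    r * (harmonic #W - 1) - q ≤ coverValue G (fun w => -stationaryHittingTime G w / 2) W x := by
  refine mul_harmonic_sub_one_add_le_coverValue hG hW (fun w hw => ?_) (fun s hs x hx hsx => ?_) x
  · linarith [hq w hw]
  · have hcommute : 2 * r ≤ commuteTime G s x := hr hs hx hsx
    rw [commuteTime] at hcommute
    linarith [hittingTime_sub_hittingTime hG hpos x s]

lemma exists_mul_harmonic_sub_one_le_expCover [Nontrivial V] (hG : G.Connected) {M : ℝ}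
    (hM : ∀ x, G.degree x ≤ M) {b : ℕ} {C : ℝ} (hC : 0 < C) (hsplit : EnergySplits G b C) {j : ℕ}
    (hj : j ≠ 0) {v : V} (hv : expCover G v ≠ ⊤) :
    ∃ N : ℕ, Fintype.card V ≤ 2 * (N * b ^ j) ∧
      j * Fintype.card V / (8 * C) * (harmonic N - 1) ≤ (M + 1) * (expCover G v).toReal := by
  have hpos : 0 < degreeSum G := (Nat.cast_pos.2 Fintype.card_pos).trans_le (card_le_degreeSum hG)
  set t := (expCover G v).toReal
  have ht : 1 ≤ t := by simpa using ENNReal.toReal_mono hv (one_le_expCover v)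
  have hhit (w : V) : hittingTime G w v ≤ t :=
    (ENNReal.ofReal_le_iff_le_toReal hv).1 (ofReal_hittingTime_le_expCover hG w v)
  obtain ⟨W, hWA, hW, hcard⟩ := exists_pairwise_le_commuteTime hG hpos hC hsplit hj
    {w | stationaryHittingTime G w ≤ 2 * M * t}
  have hWcard : Fintype.card V ≤ 2 * (#W * b ^ j) :=
    (card_le_two_mul_card_stationaryHittingTime_le hG hM (one_pos.trans_le ht) hhit).trans
      (Nat.mul_le_mul_left 2 hcard)
  refine ⟨#W, hWcard, ?_⟩
  have hWne : W.Nonempty := by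
    rw [← card_pos]
    exact Nat.pos_of_ne_zero fun h => by simp [h] at hWcard
  have hcover := mul_harmonic_sub_one_sub_le_coverValue hG hpos hWne
    (r := j * Fintype.card V / (8 * C)) (q := M * t) (fun u hu w hw huw => ?_)
    (fun w hw => (mem_filter.1 (hWA hw)).2.trans_eq (mul_assoc _ _ _)) v
  · have hreward (w : V) : -stationaryHittingTime G w / 2 ≤ 0 := by
      linarith [stationaryHittingTime_nonneg hG w]
    have := (ENNReal.ofReal_le_iff_le_toReal hv).1 (ofReal_coverValue_le_expCover hG hreward W v)
    linarith
  · calc 2 * (j * Fintype.card V / (8 * C)) = j * (Fintype.card V / (4 * C)) := by ring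
      _ ≤ j * (degreeSum G / (4 * C)) := by gcongr; exact card_le_degreeSum hG
      _ ≤ commuteTime G u w := hW hu hw huw

lemma half_log_le_harmonic_sub_one {n N b j : ℕ} (hn : 8 ≤ Real.log n)
    (hj : j * Real.log b ≤ Real.log n / 4) (hnN : n ≤ 2 * (N * b ^ j)) :
    Real.log n / 2 ≤ harmonic N - 1 := by
  have hn₀ : (n : ℝ) ≠ 0 := fun h => by norm_num [h] at hn
  have hprod : 2 * (N * b ^ j) ≠ 0 := fun h => hn₀ (by simpa [h] using hnN)
  have hN : (N : ℝ) ≠ 0 := by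
    rw [Nat.cast_ne_zero]
    rintro rfl
    simp at hprod
  have hbj : (b : ℝ) ^ j ≠ 0 := by
    norm_cast
    intro h
    simp [h] at hprod
  have hlog : Real.log n ≤ Real.log 2 + (Real.log N + j * Real.log b) := by
    rw [← Real.log_pow, ← Real.log_mul hN hbj, ← Real.log_mul two_ne_zero (mul_ne_zero hN hbj)]
    exact Real.log_le_log (by positivity) (by exact_mod_cast hnN)
  have hharmonic : Real.log N ≤ harmonic N :=
    (Real.log_le_log (by positivity) (by simp)).trans (log_add_one_le_harmonic N)
  linarith [Real.log_two_lt_d9]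

lemma card_mul_log_sq_le_expCover [Nontrivial V] (hG : G.Connected) {M : ℝ}
    (hM : ∀ x, G.degree x ≤ M) {b : ℕ} (hb : 1 < b) {C : ℝ} (hC : 0 < C)
    (hsplit : EnergySplits G b C) (hV : 8 * (Real.log b + 1) ≤ Real.log (Fintype.card V)) {v : V}
    (hv : expCover G v ≠ ⊤) :
    Fintype.card V * Real.log (Fintype.card V) ^ 2 ≤
      128 * C * Real.log b * (M + 1) * (expCover G v).toReal := by
  have hβ : 0 < Real.log b := Real.log_pos (by exact_mod_cast hb)
  set L := Real.log (Fintype.card V)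
  set j := ⌊L / Real.log b / 4⌋₊
  have hratio : 8 ≤ L / Real.log b := by
    rw [le_div_iff₀ hβ]
    linarith
  have hj : L / Real.log b / 8 ≤ j := by linarith [Nat.lt_floor_add_one (L / Real.log b / 4)]
  have hj' : j * Real.log b ≤ L / 4 :=
    calc j * Real.log b ≤ L / Real.log b / 4 * Real.log b := by
          gcongr
          exact Nat.floor_le (by positivity)
      _ = L / 4 := by field_simp
  have hj₀ : j ≠ 0 := fun h => by
    rw [h, Nat.cast_zero] at hj
    linarith
  obtain ⟨N, hN, hcover⟩ := exists_mul_harmonic_sub_one_le_expCover hG hM hC hsplit hj₀ hv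
  calc Fintype.card V * L ^ 2
      = 128 * C * Real.log b *
          (L / Real.log b / 8 * Fintype.card V / (8 * C) * (L / 2)) := by
        field_simp
        ring
    _ ≤ 128 * C * Real.log b * (j * Fintype.card V / (8 * C) * (harmonic N - 1)) := by
        gcongr
        exact half_log_le_harmonic_sub_one (by linarith) hj' hN
    _ ≤ 128 * C * Real.log b * ((M + 1) * (expCover G v).toReal) := by gcongr
    _ = 128 * C * Real.log b * (M + 1) * (expCover G v).toReal := by ring

end LowerBound

lemma mul_log_sq_le_exp_mul_sq {n : ℕ} {L : ℝ} (hn : Real.log n ≤ L) :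
    n * Real.log n ^ 2 ≤ Real.exp L * L ^ 2 := by
  have hle : (n : ℝ) ≤ Real.exp L := (Real.le_exp_log n).trans (Real.exp_le_exp.2 hn)
  gcongr

theorem exists_mul_log_sq_le_expCover_of_energySplits (M : ℕ) {b : ℕ} (hb : 1 < b) {C : ℝ}
    (hC : 0 < C) :
    ∃ c : ℝ, 0 < c ∧
      ∀ (V : Type*) [Fintype V] [DecidableEq V] [Nontrivial V] (G : SimpleGraph V)
        [DecidableRel G.Adj], G.Connected → (∀ x, G.degree x ≤ M) → EnergySplits G b C → ∀ v,
          ENNReal.ofReal (c * Fintype.card V * Real.log (Fintype.card V) ^ 2) ≤ expCover G v := by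
  have hβ : 0 < Real.log b := Real.log_pos (by exact_mod_cast hb)
  set L := 8 * (Real.log b + 1)
  set K₁ := 128 * C * Real.log b * (M + 1)
  set K₂ := Real.exp L * L ^ 2
  have hK₁ : 0 < K₁ := by positivity
  have hK : 0 < max K₁ K₂ := lt_max_of_lt_left hK₁
  refine ⟨(max K₁ K₂)⁻¹, inv_pos.2 hK, fun V _ _ _ G _ hG hM hsplit v => ?_⟩
  obtain htop | htop := eq_or_ne (expCover G v) ⊤
  · simp [htop]
  rw [ENNReal.ofReal_le_iff_le_toReal htop, mul_assoc, inv_mul_le_iff₀ hK]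
  have ht : 1 ≤ (expCover G v).toReal := by simpa using ENNReal.toReal_mono htop (one_le_expCover v)
  obtain hV | hV := le_total L (Real.log (Fintype.card V))
  · calc Fintype.card V * Real.log (Fintype.card V) ^ 2
        ≤ K₁ * (expCover G v).toReal := card_mul_log_sq_le_expCover hG
          (fun x => by exact_mod_cast hM x) hb hC hsplit hV htop
      _ ≤ max K₁ K₂ * (expCover G v).toReal := by gcongr; exact le_max_left K₁ K₂
  · calc Fintype.card V * Real.log (Fintype.card V) ^ 2
        ≤ K₂ := mul_log_sq_le_exp_mul_sq hV
      _ ≤ max K₁ K₂ := le_max_right K₁ K₂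
      _ ≤ max K₁ K₂ * (expCover G v).toReal := le_mul_of_one_le_right hK.le ht

/-! ### Circle packings split vertex sets -/

section Packing

open Module Metric

variable {E : Type*} [NormedAddCommGroup E] [NormedSpace ℝ E]

lemma exists_ball_min_subset_inter {z p : E} {R r ρ : ℝ} (hR : 0 ≤ R) (hr : 0 ≤ r) (hρ : 0 ≤ ρ)
    (hz : dist z p ≤ R + ρ) :
    ∃ w, ball w (min r ρ) ⊆ ball z ρ ∩ ball p (R + 2 * r) := by
  have hmin : 0 ≤ min r ρ := le_min hr hρ
  obtain ⟨w, hzw, hwp⟩ := exists_dist_le_le (δ := ρ - min r ρ) (ε := R + min r ρ)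
    (sub_nonneg.2 (min_le_right r ρ)) (add_nonneg hR hmin) (hz.trans_eq (by ring))
  refine ⟨w, Set.subset_inter (ball_subset_ball' ?_) (ball_subset_ball' ?_)⟩
  · rw [dist_comm]
    linarith
  · linarith [min_le_left r ρ]

variable [FiniteDimensional ℝ E]

lemma sum_min_pow_finrank_le {ι : Type*} {S : Finset ι} {z : ι → E} {rad : ι → ℝ}
    (hrad : ∀ x ∈ S, 0 < rad x)
    (hdisj : (S : Set ι).PairwiseDisjoint fun x => ball (z x) (rad x)) {p : E} {R r : ℝ}
    (hR : 0 ≤ R) (hr : 0 < r) (hS : ∀ x ∈ S, dist (z x) p ≤ R + rad x) :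
    ∑ x ∈ S, min r (rad x) ^ finrank ℝ E ≤ (R + 2 * r) ^ finrank ℝ E := by
  let _ : MeasurableSpace E := borel E
  have : BorelSpace E := ⟨rfl⟩
  let μ : MeasureTheory.Measure E := MeasureTheory.Measure.addHaar
  have hball : ∀ x ∈ S, ∃ w, ball w (min r (rad x)) ⊆ ball (z x) (rad x) ∩ ball p (R + 2 * r) :=
    fun x hx => exists_ball_min_subset_inter hR hr.le (hrad x hx).le (hS x hx)
  choose! w hw using hball
  have hmin : ∀ x ∈ S, 0 < min r (rad x) := fun x hx => lt_min hr (hrad x hx)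
  have hdisj' : (S : Set ι).PairwiseDisjoint fun x => ball (w x) (min r (rad x)) :=
    hdisj.mono_on fun x hx => (hw x hx).trans Set.inter_subset_left
  have hvolume : ∑ x ∈ S, μ (ball (w x) (min r (rad x))) ≤ μ (ball p (R + 2 * r)) := by
    rw [← MeasureTheory.measure_biUnion_finset hdisj' fun x _ => measurableSet_ball]
    exact MeasureTheory.measure_mono
      (Set.iUnion₂_subset fun x hx => (hw x hx).trans Set.inter_subset_right)
  rw [μ.addHaar_ball_of_pos p (by positivity),
    sum_congr rfl fun x hx => μ.addHaar_ball_of_pos (w x) (hmin x hx), ← sum_mul,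
    ENNReal.mul_le_mul_iff_left (measure_ball_pos μ 0 one_pos).ne'
      MeasureTheory.measure_ball_lt_top.ne,
    ← ENNReal.ofReal_sum_of_nonneg fun x hx => (pow_pos (hmin x hx) _).le,
    ENNReal.ofReal_le_ofReal_iff (by positivity)] at hvolume
  exact hvolume

lemma card_le_five_pow_finrank {ι : Type*} {F : Finset ι} {z : ι → E} {p : E} {r : ℝ} (hr : 0 < r)
    (hsep : (F : Set ι).Pairwise fun x y => r ≤ dist (z x) (z y))
    (hF : ∀ x ∈ F, dist (z x) p ≤ 2 * r) : #F ≤ 5 ^ finrank ℝ E := by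
  have hsum := sum_min_pow_finrank_le (z := z) (rad := fun _ => r / 2) (p := p) (R := 3 / 2 * r)
    (r := r / 2) (fun _ _ => half_pos hr)
    (fun x hx y hy hxy => ball_disjoint_ball (by linarith [hsep hx hy hxy])) (by positivity)
    (half_pos hr) fun x hx => (hF x hx).trans_eq (by ring)
  rw [min_self, sum_const, nsmul_eq_mul,
    show 3 / 2 * r + 2 * (r / 2) = 5 * (r / 2) by ring, mul_pow] at hsum
  exact_mod_cast le_of_mul_le_mul_right hsum (by positivity)

end Packing

section MetricCutoff

variable {X : Type*} [PseudoMetricSpace X]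

lemma exists_minimal_radius {ι : Type*} (z : ι → X) {A : Finset ι} {k : ℕ} (hk : 0 < k)
    (hkA : k ≤ #A) :
    ∃ a ∈ A, ∃ r, k ≤ #{c ∈ A | dist (z c) (z a) ≤ r} ∧
      ∀ w ∈ A, #{c ∈ A | dist (z c) (z w) < r} < k := by
  let Q : Finset (ι × ι) :=
    {q ∈ A ×ˢ A | k ≤ #{c ∈ A | dist (z c) (z q.1) ≤ dist (z q.2) (z q.1)}}
  have hQ : ∀ F ⊆ A, k ≤ #F → ∀ a ∈ A, ∃ b ∈ F, (a, b) ∈ Q := by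
    intro F hFA hkF a ha
    obtain ⟨b, hb, hmax⟩ := exists_max_image F (fun c => dist (z c) (z a))
      (card_pos.1 (hk.trans_le hkF))
    refine ⟨b, hb, mem_filter.2 ⟨mk_mem_product ha (hFA hb), hkF.trans (card_le_card ?_)⟩⟩
    exact fun c hc => mem_filter.2 ⟨hFA hc, hmax c hc⟩
  obtain ⟨a₀, ha₀⟩ := card_pos.1 (hk.trans_le hkA)
  obtain ⟨b₀, -, hab₀⟩ := hQ A Subset.rfl hkA a₀ ha₀
  obtain ⟨⟨a, b⟩, hab, hmin⟩ := exists_min_image Q (fun q => dist (z q.2) (z q.1)) ⟨_, hab₀⟩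
  obtain ⟨habA, habk⟩ := mem_filter.1 hab
  refine ⟨a, (mem_product.1 habA).1, dist (z b) (z a), habk, fun w hw => ?_⟩
  by_contra! hkF
  obtain ⟨c, hc, hwc⟩ := hQ _ (filter_subset _ _) hkF w hw
  exact (hmin _ hwc).not_gt (mem_filter.1 hc).2

/-- The Lipschitz cutoff at scale `r` around `p`: it is `0` on the ball of radius `r`, `1` outside
the ball of radius `2 * r`, and linear in the distance to `p` in between. -/
noncomputable def annularCutoff (p : X) (r : ℝ) (q : X) : ℝ :=
  Set.projIcc 0 1 zero_le_one (dist q p / r - 1)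

lemma annularCutoff_eq_zero {p q : X} {r : ℝ} (hr : 0 < r) (hq : dist q p ≤ r) :
    annularCutoff p r q = 0 := by
  rw [annularCutoff, Set.projIcc_of_le_left _ (sub_nonpos.2 ((div_le_one hr).2 hq))]

lemma annularCutoff_eq_one {p q : X} {r : ℝ} (hr : 0 < r) (hq : 2 * r ≤ dist q p) :
    annularCutoff p r q = 1 := by
  have hq' : 1 + 1 ≤ dist q p / r := by rwa [one_add_one_eq_two, le_div_iff₀ hr]
  rw [annularCutoff, Set.projIcc_of_right_le _ (le_sub_iff_add_le.2 hq')]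

lemma abs_annularCutoff_sub_le_one (p : X) (r : ℝ) (q q' : X) :
    |annularCutoff p r q - annularCutoff p r q'| ≤ 1 := by
  rw [← Real.dist_eq]
  exact Real.dist_le_of_mem_Icc_01 (Subtype.coe_prop _) (Subtype.coe_prop _)

lemma abs_annularCutoff_sub_le_dist_div (p : X) {r : ℝ} (hr : 0 < r) (q q' : X) :
    |annularCutoff p r q - annularCutoff p r q'| ≤ dist q q' / r := by
  have hlip := (LipschitzWith.projIcc (zero_le_one (α := ℝ))).dist_le_mul
    (dist q p / r - 1) (dist q' p / r - 1)
  rw [NNReal.coe_one, one_mul, Subtype.dist_eq, Real.dist_eq, Real.dist_eq,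
    sub_sub_sub_cancel_right, ← sub_div, abs_div, abs_of_pos hr] at hlip
  refine hlip.trans ?_
  gcongr
  exact abs_dist_sub_le q q' p

lemma sq_annularCutoff_sub_le (p : X) {r : ℝ} (hr : 0 < r) {q q' : X} {ρ ρ' : ℝ} (hρ : 0 ≤ ρ)
    (hρ' : 0 ≤ ρ') (hq : dist q q' ≤ ρ + ρ') :
    (annularCutoff p r q - annularCutoff p r q') ^ 2 ≤
      2 * (min r ρ / r) ^ 2 + 2 * (min r ρ' / r) ^ 2 := by
  have habs : |annularCutoff p r q - annularCutoff p r q'| ≤ min r ρ / r + min r ρ' / r := by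
    have hone := abs_annularCutoff_sub_le_one p r q q'
    have hdist := (le_div_iff₀ hr).1 (abs_annularCutoff_sub_le_dist_div p hr q q')
    rw [← add_div, le_div_iff₀ hr]
    rcases le_total r ρ with h | h <;> rcases le_total r ρ' with h' | h' <;>
      simp only [min_eq_left, min_eq_right, h, h'] <;> nlinarith
  calc (annularCutoff p r q - annularCutoff p r q') ^ 2
      ≤ (min r ρ / r + min r ρ' / r) ^ 2 := sq_le_sq.2 (habs.trans (le_abs_self _))
    _ ≤ 2 * ((min r ρ / r) ^ 2 + (min r ρ' / r) ^ 2) := add_sq_le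
    _ = _ := mul_add _ _ _

end MetricCutoff

/-! ### Planar graphs -/

namespace IsCirclePacking

open Metric

variable {V : Type*} {G : SimpleGraph V} {z : V → EuclideanSpace ℝ (Fin 2)} {rad : V → ℝ}

lemma disjoint_ball (h : IsCirclePacking G z rad) {u v : V} (huv : u ≠ v) :
    Disjoint (ball (z u) (rad u)) (ball (z v) (rad v)) := by
  rw [← interior_closedBall _ (h.1 u).ne', ← interior_closedBall _ (h.1 v).ne']
  exact Set.disjoint_iff_inter_eq_empty.2 (h.2.1 u v huv)

lemma le_dist (h : IsCirclePacking G z rad) {u v : V} (huv : u ≠ v) :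
    rad u ≤ dist (z v) (z u) := by
  by_contra! hlt
  exact Set.disjoint_left.1 (h.disjoint_ball huv) (mem_ball.2 hlt) (mem_ball_self (h.1 v))

lemma dist_le_of_adj (h : IsCirclePacking G z rad) {u v : V} (huv : G.Adj u v) :
    dist (z u) (z v) ≤ rad u + rad v :=
  have ⟨_, hu, hv⟩ := (h.2.2 u v huv.ne).2 huv
  (dist_triangle_left _ _ _).trans (add_le_add hu hv)

variable [Fintype V]

lemma sum_sq_min_div_le (h : IsCirclePacking G z rad) (p : EuclideanSpace ℝ (Fin 2)) {r : ℝ}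
    (hr : 0 < r) : ∑ x with dist (z x) p ≤ 4 * r + rad x, (min r (rad x) / r) ^ 2 ≤ 36 := by
  have hsum := sum_min_pow_finrank_le (S := {x | dist (z x) p ≤ 4 * r + rad x})
    (fun x _ => h.1 x) (fun u _ v _ huv => h.disjoint_ball huv) (p := p)
    (R := 4 * r) (by positivity) hr fun x hx => (mem_filter.1 hx).2
  rw [finrank_euclideanSpace_fin] at hsum
  simp_rw [div_pow]
  rw [← sum_div, div_le_iff₀ (by positivity)]
  exact hsum.trans_eq (by ring)

variable [DecidableEq V] [DecidableRel G.Adj]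

lemma dirichletForm_annularCutoff_le (h : IsCirclePacking G z rad) {M : ℕ}
    (hdeg : ∀ x, G.degree x ≤ M) {p : EuclideanSpace ℝ (Fin 2)} {r : ℝ} (hr : 0 < r)
    (hrad : ∀ y, dist (z y) p < 2 * r → rad y ≤ 2 * r) :
    dirichletForm G (annularCutoff p r ∘ z) (annularCutoff p r ∘ z) ≤ 72 * M := by
  let m (x : V) : ℝ :=
    if dist (z x) p ≤ 4 * r + rad x then 2 * (min r (rad x) / r) ^ 2 else 0
  have hm (x) : 0 ≤ m x := by
    dsimp only [m]
    positivity
  have hnear (x y) (hxy : G.Adj x y) (hy : dist (z y) p < 2 * r) :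
      (annularCutoff p r (z x) - annularCutoff p r (z y)) ^ 2 ≤ m x + m y := by
    have hdist := h.dist_le_of_adj hxy
    have hx : dist (z x) p ≤ 4 * r + rad x := by
      linarith [dist_triangle (z x) (z y) p, hrad y hy]
    have hy : dist (z y) p ≤ 4 * r + rad y := by linarith [h.1 y]
    simp only [m, if_pos hx, if_pos hy]
    exact sq_annularCutoff_sub_le p hr (h.1 x).le (h.1 y).le hdist
  have hedge (x y) (hxy : G.Adj x y) :
      (annularCutoff p r (z x) - annularCutoff p r (z y)) ^ 2 ≤ m x + m y := by
    obtain hy | hy := lt_or_ge (dist (z y) p) (2 * r)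
    · exact hnear x y hxy hy
    obtain hx | hx := lt_or_ge (dist (z x) p) (2 * r)
    · rw [sub_sq_comm, add_comm]
      exact hnear y x hxy.symm hx
    · rw [annularCutoff_eq_one hr hx, annularCutoff_eq_one hr hy, sub_self, sq, zero_mul]
      exact add_nonneg (hm x) (hm y)
  calc dirichletForm G (annularCutoff p r ∘ z) (annularCutoff p r ∘ z)
      ≤ ∑ x, G.degree x * m x := dirichletForm_self_le_of_sq_sub_le G hedge
    _ ≤ ∑ x, M * m x := sum_le_sum fun x _ =>
        mul_le_mul_of_nonneg_right (Nat.cast_le.2 (hdeg x)) (hm x)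
    _ = 2 * M * ∑ x with dist (z x) p ≤ 4 * r + rad x, (min r (rad x) / r) ^ 2 := by
        rw [← mul_sum, ← sum_filter, ← mul_sum]
        ring
    _ ≤ 2 * M * 36 := by
        gcongr
        exact h.sum_sq_min_div_le p hr
    _ = 72 * M := by ring

/-- Cut off around the smallest disk that is centered at a point of `A` and holds a `1 / 26`
fraction of `A`. By minimality the concentric disk of twice the radius `r`, which has at most
`5 ^ 2 = 25` points at mutual distance `r`, holds at most `25 / 26` of `A`. -/
lemma energySplits (h : IsCirclePacking G z rad) {M : ℕ} (hdeg : ∀ x, G.degree x ≤ M) :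
    EnergySplits G 26 (72 * M) := by
  intro A hA
  set k := (#A + 25) / 26
  obtain ⟨a, -, r, hk, hlt⟩ := exists_minimal_radius z (A := A) (k := k) (by lia) (by lia)
  have hra : rad a ≤ r := by
    obtain ⟨c, hc, hca⟩ := exists_mem_ne (lt_of_lt_of_le (by lia) hk) a
    exact (h.le_dist hca.symm).trans (mem_filter.1 hc).2
  have hr : 0 < r := (h.1 a).trans_le hra
  have hcount : #{c ∈ A | dist (z c) (z a) ≤ 2 * r} ≤ 25 * (k - 1) := by
    obtain ⟨W, hWA, hW, hcard⟩ := exists_pairwise_subset_card_le_mul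
      (r := fun u w => r ≤ dist (z u) (z w)) (N := k - 1)
      (A := {c ∈ A | dist (z c) (z a) ≤ 2 * r}) (fun u => by simpa using hr)
      (fun u w huw => by rwa [dist_comm]) fun w hw => by
        simp_rw [not_le]
        exact (card_le_card (filter_subset_filter _ (filter_subset _ _))).trans
          (Nat.le_sub_one_of_lt (hlt w (mem_filter.1 hw).1))
    refine hcard.trans (Nat.mul_le_mul_right _ ?_)
    simpa using card_le_five_pow_finrank hr hW fun x hx => (mem_filter.1 (hWA hx)).2
  have hzero : k ≤ #{x ∈ A | (annularCutoff (z a) r ∘ z) x = 0} :=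
    hk.trans (card_le_card (monotone_filter_right _ fun x _ hx => annularCutoff_eq_zero hr hx))
  have hone : #A ≤ #{x ∈ A | (annularCutoff (z a) r ∘ z) x = 1} + 25 * (k - 1) := by
    rw [← card_filter_add_card_filter_not (s := A) fun c => dist (z c) (z a) ≤ 2 * r, add_comm]
    refine add_le_add (card_le_card (monotone_filter_right _ fun x _ hx => ?_)) hcount
    exact annularCutoff_eq_one hr (not_le.1 hx).le
  refine ⟨annularCutoff (z a) r ∘ z, h.dirichletForm_annularCutoff_le hdeg hr fun y hy => ?_,
    by lia, by lia⟩
  obtain rfl | hya := eq_or_ne y a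
  · linarith
  · exact (h.le_dist hya).trans (by rw [dist_comm]; exact hy.le)

end IsCirclePacking

/-- For every `M ≥ 1` there is `c > 0` (depending only on `M`) such that
for every finite connected simple graph `G` with `n ≥ 2` vertices, maximal degree at most
`M`, admitting a circle packing (i.e. planar), and every vertex `v`, the expected cover
time of the simple random walk started at `v` is at least `c · n · (log n)²`. -/
theorem cover_time_lower_bound_planar :
    ∀ M : ℕ, 1 ≤ M → ∃ c : ℝ, 0 < c ∧
      ∀ (V : Type) (_ : Fintype V) (_ : DecidableEq V) (G : SimpleGraph V)
        (_ : DecidableRel G.Adj),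
        G.Connected → 2 ≤ Fintype.card V → (∀ v : V, G.degree v ≤ M) →
        HasCirclePacking G →
        ∀ v : V,
          ENNReal.ofReal (c * (Fintype.card V : ℝ) * Real.log (Fintype.card V) ^ 2)
            ≤ expCover G v := by
  intro M hM
  obtain ⟨c, hc, hcover⟩ := exists_mul_log_sq_le_expCover_of_energySplits M
    (b := 26) (by norm_num) (C := 72 * M) (by positivity)
  refine ⟨c, hc, fun V _ _ G _ hG hcard hdeg ⟨z, rad, hpack⟩ v => ?_⟩
  have : Nontrivial V := Fintype.one_lt_card_iff_nontrivial.1 hcard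
  exact hcover V G hG hdeg (hpack.energySplits hdeg) v
end

section
/- Let G = (V,E) be a finite connected simple graph with n ≥ 2 vertices which admits a circle packing (equivalently, is planar). Then for every vertex v ∈ V, the expected cover time of the simple random walk started at v satisfies E_v C < 6 n². -/
open Finset
open scoped ENNReal

/-! By reversibility the expected return time to `w` is `2m / deg w`, so the hitting times of `w`
from its neighbors sum to `2m - deg w`; summed over all `w`, the hitting times along the `2m`
directed edges amount to `2m (n - 1)`. A closed walk around a spanning tree uses each directed edge
at most once, and by the strong Markov property the cover time is at most the sum of the hitting
times along it. Hence `E_v C ≤ 2m (n - 1)`.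

Joining the centers of tangent disks gives a straight-line drawing of `G`: by strict convexity three
disks with disjoint interiors have no common point, so the segments do not cross. In a
straight-line drawing with distinct abscissas, every edge is the lowest among the edges leaving some
vertex to the right, among those entering it from the left, or among those passing above it. Each
vertex is charged at most three times, whence `m ≤ 3n`. -/

section RandomWalk

variable {V : Type*} [Fintype V] (G : SimpleGraph V) [DecidableRel G.Adj]

lemma sum_sum_neighborFinset {M : Type*} [AddCommMonoid M] (f : V → M) :
    ∑ x, ∑ y ∈ G.neighborFinset x, f y = ∑ x, G.degree x • f x := by
  rw [sum_comm' (t' := univ) (s' := fun y => G.neighborFinset y) (by simp [G.adj_comm])]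
  simp

lemma degree_mul_sum_stepProb_mul (x : V) (f : V → ℝ) :
    G.degree x * ∑ y, stepProb G x y * f y = ∑ y ∈ G.neighborFinset x, f y := by
  rw [mul_sum, G.neighborFinset_eq_filter, sum_filter]
  refine sum_congr rfl fun y _ => ?_
  by_cases h : G.Adj x y
  · have : (G.degree x : ℝ) ≠ 0 := by exact_mod_cast h.degree_pos_left.ne'
    simp [stepProb, h, this]
  · simp [stepProb, h]

lemma sum_stepProb_le_one (x : V) : ∑ y, stepProb G x y ≤ 1 := by
  simp only [stepProb, ← sum_filter, ← G.neighborFinset_eq_filter, sum_const,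
    G.card_neighborFinset_eq_degree, nsmul_eq_mul]
  exact mul_inv_le_one

lemma sum_ofReal_stepProb_le_one (x : V) : ∑ y, ENNReal.ofReal (stepProb G x y) ≤ 1 := by
  rw [← ENNReal.ofReal_sum_of_nonneg fun y _ => stepProb_nonneg G x y]
  exact ENNReal.ofReal_le_one.2 (sum_stepProb_le_one G x)

variable [DecidableEq V]

/-- `P_x(the walk has not visited all of A by time k)`: the common generalization of
`hitSurvival` (`A = {w}`) and `coverSurvival` (`A = univ`). -/
noncomputable def visitSurvival (A : Finset V) (x : V) (k : ℕ) : ℝ :=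
  ∑ f : Fin (k + 1) → V, if f 0 = x ∧ ∃ w ∈ A, ∀ i, f i ≠ w then pathProb G f else 0

lemma visitSurvival_singleton (x w : V) (k : ℕ) :
    visitSurvival G {w} x k = hitSurvival G x w k := by
  simp [visitSurvival, hitSurvival]

lemma visitSurvival_univ (x : V) (k : ℕ) :
    visitSurvival G univ x k = coverSurvival G x k := by
  simp [visitSurvival, coverSurvival]

lemma visitSurvival_nonneg (A : Finset V) (x : V) (k : ℕ) : 0 ≤ visitSurvival G A x k :=
  sum_nonneg fun f _ => by split_ifs <;> simp [pathProb_nonneg]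

lemma hitSurvival_nonneg (x w : V) (k : ℕ) : 0 ≤ hitSurvival G x w k :=
  visitSurvival_singleton G x w k ▸ visitSurvival_nonneg G {w} x k

lemma visitSurvival_mono {A B : Finset V} (h : A ⊆ B) (x : V) (k : ℕ) :
    visitSurvival G A x k ≤ visitSurvival G B x k := by
  refine sum_le_sum fun f _ => ?_
  have := pathProb_nonneg G f
  split_ifs with hA hB
  · rfl
  · obtain ⟨hx, w, hw, hf⟩ := hA
    exact absurd ⟨hx, w, h hw, hf⟩ hB
  all_goals simp [this]

lemma visitSurvival_zero (A : Finset V) (x : V) :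
    visitSurvival G A x 0 = if (A.erase x).Nonempty then 1 else 0 := by
  rw [visitSurvival, ← (Equiv.funUnique (Fin 1) V).symm.sum_comp, sum_eq_single x]
  · simp [pathProb, Finset.Nonempty, eq_comm, and_comm]
  · intro y _ hyx
    simp [hyx]
  · simp

lemma visitSurvival_succ (A : Finset V) (x : V) (k : ℕ) :
    visitSurvival G A x (k + 1) =
      ∑ y, stepProb G x y * visitSurvival G (A.erase x) y k := by
  have avoid_cons (f : Fin (k + 1) → V) :
      (∃ w ∈ A, ∀ i, (Fin.cons x f : Fin (k + 2) → V) i ≠ w) ↔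
        ∃ w ∈ A.erase x, ∀ i, f i ≠ w := by
    simp only [Fin.forall_fin_succ (n := k + 1), Fin.cons_zero, Fin.cons_succ, mem_erase]
    exact exists_congr fun w => by tauto
  simp only [visitSurvival, mul_sum]
  rw [← (Fin.consEquiv fun _ => V).sum_comp, Fintype.sum_prod_type, sum_eq_single x, sum_comm]
  · refine sum_congr rfl fun f _ => ?_
    rw [sum_eq_single (f 0)]
    · simp only [Fin.consEquiv, Equiv.coe_fn_mk, Fin.cons_zero, true_and, avoid_cons,
        pathProb_cons, mul_ite, mul_zero]
    · intro y _ hy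
      simp [hy.symm]
    · simp
  · intro y _ hyx
    simp [Fin.consEquiv, hyx]
  · simp

/-- The expected time at which the walk started at `x` has visited all of `A`, as
`∑_{k ≥ 0} P_x(not all of A visited by time k)`. -/
noncomputable def expVisit (A : Finset V) (x : V) : ℝ≥0∞ :=
  ∑' k : ℕ, ENNReal.ofReal (visitSurvival G A x k)

lemma expVisit_singleton (x w : V) : expVisit G {w} x = expHit G x w := by
  simp only [expVisit, expHit, visitSurvival_singleton]

lemma expVisit_univ (x : V) : expVisit G univ x = expCover G x := by
  simp only [expVisit, expCover, visitSurvival_univ]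

lemma expVisit_mono {A B : Finset V} (h : A ⊆ B) (x : V) : expVisit G A x ≤ expVisit G B x :=
  ENNReal.tsum_le_tsum fun k => ENNReal.ofReal_le_ofReal (visitSurvival_mono G h x k)

lemma ofReal_visitSurvival_succ (A : Finset V) (x : V) (k : ℕ) :
    ENNReal.ofReal (visitSurvival G A x (k + 1)) =
      ∑ y, ENNReal.ofReal (stepProb G x y) *
        ENNReal.ofReal (visitSurvival G (A.erase x) y k) := by
  rw [visitSurvival_succ, ENNReal.ofReal_sum_of_nonneg fun y _ =>
    mul_nonneg (stepProb_nonneg G x y) (visitSurvival_nonneg G _ y k)]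
  simp only [ENNReal.ofReal_mul (stepProb_nonneg G x _)]

lemma expVisit_eq_add_sum (A : Finset V) (x : V) :
    expVisit G A x = (if (A.erase x).Nonempty then 1 else 0) +
      ∑ y, ENNReal.ofReal (stepProb G x y) * expVisit G (A.erase x) y := by
  rw [expVisit, tsum_eq_zero_add' ENNReal.summable, visitSurvival_zero, apply_ite ENNReal.ofReal,
    ENNReal.ofReal_one, ENNReal.ofReal_zero]
  simp only [ofReal_visitSurvival_succ, expVisit, ← ENNReal.tsum_mul_left]
  rw [Summable.tsum_finsetSum fun _ _ => ENNReal.summable]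

lemma expVisit_erase_self (A : Finset V) (x : V) : expVisit G (A.erase x) x = expVisit G A x := by
  rw [expVisit_eq_add_sum, expVisit_eq_add_sum G A, erase_idem]

lemma expHit_eq_one_add_sum {x w : V} (h : x ≠ w) :
    expHit G x w = 1 + ∑ y, ENNReal.ofReal (stepProb G x y) * expHit G y w := by
  rw [← expVisit_singleton, expVisit_eq_add_sum, erase_eq_of_notMem (by simpa using h)]
  simp [expVisit_singleton]

lemma sum_range_visitSurvival_le_expHit_add_expVisit (A : Finset V) (x w : V) (N : ℕ) :
    ∑ k ∈ range N, ENNReal.ofReal (visitSurvival G A x k) ≤ expHit G x w + expVisit G A w := by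
  induction N generalizing A x with
  | zero => simp
  | succ N ih =>
    obtain rfl | hxw := eq_or_ne x w
    · exact (ENNReal.sum_le_tsum _).trans le_add_self
    have h_zero : ENNReal.ofReal (visitSurvival G A x 0) ≤ 1 := by
      rw [visitSurvival_zero]
      split_ifs <;> simp
    calc ∑ k ∈ range (N + 1), ENNReal.ofReal (visitSurvival G A x k)
        = ∑ y, ENNReal.ofReal (stepProb G x y) *
            ∑ k ∈ range N, ENNReal.ofReal (visitSurvival G (A.erase x) y k) +
            ENNReal.ofReal (visitSurvival G A x 0) := by
          simp only [sum_range_succ', ofReal_visitSurvival_succ, mul_sum]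
          rw [sum_comm]
      _ ≤ ∑ y, ENNReal.ofReal (stepProb G x y) * (expHit G y w + expVisit G A w) + 1 := by
          gcongr with y
          exact (ih _ y).trans (by gcongr; exact expVisit_mono G (erase_subset x A) w)
      _ = expHit G x w + (∑ y, ENNReal.ofReal (stepProb G x y)) * expVisit G A w := by
          simp only [expHit_eq_one_add_sum G hxw, mul_add, sum_add_distrib, sum_mul]
          ring
      _ ≤ expHit G x w + expVisit G A w := by
          gcongr
          exact mul_le_of_le_one_left' (sum_ofReal_stepProb_le_one G x)

lemma expVisit_le_expHit_add_expVisit (A : Finset V) (x w : V) :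
    expVisit G A x ≤ expHit G x w + expVisit G A w :=
  ENNReal.tsum_le_of_sum_range_le (sum_range_visitSurvival_le_expHit_add_expVisit G A x w)

variable {G} in
lemma expVisit_support_le_sum_expHit {x y : V} (p : G.Walk x y) :
    expVisit G p.support.toFinset x ≤ (p.darts.map fun d => expHit G d.fst d.snd).sum := by
  induction p with
  | nil =>
    rw [← expVisit_erase_self]
    simp [expVisit, visitSurvival]
  | @cons x z y h p ih =>
    calc expVisit G (SimpleGraph.Walk.cons h p).support.toFinset x
        = expVisit G (p.support.toFinset.erase x) x := by
          rw [← expVisit_erase_self, SimpleGraph.Walk.support_cons, List.toFinset_cons,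
            erase_insert_eq_erase]
      _ ≤ expVisit G p.support.toFinset x := expVisit_mono G (erase_subset _ _) x
      _ ≤ expHit G x z + expVisit G p.support.toFinset z :=
          expVisit_le_expHit_add_expVisit G _ x z
      _ ≤ _ := by
          simpa using add_le_add_right ih (expHit G x z)

lemma hitSurvival_zero (x w : V) : hitSurvival G x w 0 = if x = w then 0 else 1 := by
  rw [← visitSurvival_singleton, visitSurvival_zero]
  split_ifs <;> simp_all [erase_eq_of_notMem]

lemma hitSurvival_succ (x w : V) (k : ℕ) :
    hitSurvival G x w (k + 1) =
      if x = w then 0 else ∑ y, stepProb G x y * hitSurvival G y w k := by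
  rw [← visitSurvival_singleton, visitSurvival_succ]
  split_ifs with h
  · simp [h, visitSurvival]
  · rw [erase_eq_of_notMem (by simpa using h)]
    simp only [visitSurvival_singleton]

/-- Reversibility: one step of the walk preserves the measure `degree`, and the mass it carries
into `w` is what the survival loses. -/
lemma sum_degree_mul_hitSurvival_succ (w : V) (k : ℕ) :
    ∑ x, G.degree x * hitSurvival G x w (k + 1) + ∑ y ∈ G.neighborFinset w, hitSurvival G y w k =
      ∑ x, G.degree x * hitSurvival G x w k := by
  simp only [← nsmul_eq_mul]
  rw [← sum_sum_neighborFinset G fun x => hitSurvival G x w k,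
    ← add_sum_erase univ (fun x => G.degree x • hitSurvival G x w (k + 1)) (mem_univ w),
    ← add_sum_erase univ (fun x => ∑ y ∈ G.neighborFinset x, hitSurvival G y w k) (mem_univ w),
    hitSurvival_succ, if_pos rfl, smul_zero, zero_add, add_comm]
  congr 1
  refine sum_congr rfl fun x hx => ?_
  rw [hitSurvival_succ, if_neg (ne_of_mem_erase hx), nsmul_eq_mul, degree_mul_sum_stepProb_mul]

lemma sum_degree_mul_hitSurvival_zero (w : V) :
    ∑ x, G.degree x * hitSurvival G x w 0 = ∑ x ∈ univ.erase w, (G.degree x : ℝ) := by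
  rw [← add_sum_erase univ _ (mem_univ w), hitSurvival_zero, if_pos rfl, mul_zero, zero_add]
  refine sum_congr rfl fun x hx => ?_
  rw [hitSurvival_zero, if_neg (ne_of_mem_erase hx), mul_one]

lemma sum_expHit_neighborFinset_le (w : V) :
    ∑ y ∈ G.neighborFinset w, expHit G y w ≤ (∑ x ∈ univ.erase w, G.degree x : ℕ) := by
  have telescope (N : ℕ) : ∑ k ∈ range N, ∑ y ∈ G.neighborFinset w, hitSurvival G y w k =
      ∑ x, G.degree x * hitSurvival G x w 0 - ∑ x, G.degree x * hitSurvival G x w N := by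
    rw [← sum_range_sub' fun k => ∑ x, G.degree x * hitSurvival G x w k]
    exact sum_congr rfl fun k _ => eq_sub_of_add_eq' (sum_degree_mul_hitSurvival_succ G w k)
  simp only [expHit]
  rw [← Summable.tsum_finsetSum fun _ _ => ENNReal.summable]
  refine ENNReal.tsum_le_of_sum_range_le fun N => ?_
  have h_nonneg (k : ℕ) : 0 ≤ ∑ y ∈ G.neighborFinset w, hitSurvival G y w k :=
    sum_nonneg fun y _ => hitSurvival_nonneg G y w k
  simp only [← ENNReal.ofReal_sum_of_nonneg fun y _ => hitSurvival_nonneg G y w _]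
  rw [← ENNReal.ofReal_sum_of_nonneg fun k _ => h_nonneg k, ← ENNReal.ofReal_natCast, telescope,
    sum_degree_mul_hitSurvival_zero, Nat.cast_sum]
  exact ENNReal.ofReal_le_ofReal <| sub_le_self _ <| sum_nonneg fun x _ =>
    mul_nonneg (Nat.cast_nonneg _) (hitSurvival_nonneg G x w N)

end RandomWalk

section ClosedWalk

variable {V : Type*} {G : SimpleGraph V}

lemma exists_closedWalk_insert [DecidableEq V] {v : V} (p : G.Walk v v) (hp : p.darts.Nodup)
    (d : G.Dart) (hfst : d.fst ∈ p.support) (hsnd : d.snd ∉ p.support) :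
    ∃ q : G.Walk v v, q.darts.Nodup ∧ q.support.toFinset = insert d.snd p.support.toFinset := by
  have h_darts : (p.takeUntil d.fst hfst).darts ++ (p.dropUntil d.fst hfst).darts = p.darts := by
    rw [← SimpleGraph.Walk.darts_append, p.take_spec hfst]
  have h_support (u : V) :
      u ∈ p.support ↔ u ∈ (p.takeUntil d.fst hfst).support ∨
        u ∈ (p.dropUntil d.fst hfst).support := by
    rw [← SimpleGraph.Walk.mem_support_append_iff, p.take_spec hfst]
  have hd : d ∉ p.darts := fun h => hsnd (p.dart_snd_mem_support_of_mem_darts h)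
  have hd_symm : d.symm ∉ p.darts := fun h => hsnd (p.dart_fst_mem_support_of_mem_darts h)
  refine ⟨(p.takeUntil d.fst hfst).append
    (.cons d.adj (.cons d.adj.symm (p.dropUntil d.fst hfst))), ?_, ?_⟩
  · have h_perm : List.Perm ((p.takeUntil d.fst hfst).darts ++
        d :: d.symm :: (p.dropUntil d.fst hfst).darts) (d :: d.symm :: p.darts) := by
      rw [← h_darts]
      exact List.perm_middle.trans (List.perm_middle.cons d)
    simp only [SimpleGraph.Walk.darts_append, SimpleGraph.Walk.darts_cons]
    exact h_perm.nodup_iff.2 <| by simp [hd, hd_symm, hp, d.symm_ne.symm]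
  · ext u
    have := SimpleGraph.Walk.end_mem_support (p.takeUntil d.fst hfst)
    simp only [List.mem_toFinset, SimpleGraph.Walk.mem_support_append_iff,
      SimpleGraph.Walk.support_cons, List.mem_cons, mem_insert, h_support]
    grind

lemma exists_closedWalk_darts_nodup [Fintype V] [DecidableEq V] (hG : G.Connected) (v : V) :
    ∃ p : G.Walk v v, p.darts.Nodup ∧ p.support.toFinset = univ := by
  obtain ⟨S, ⟨p, hp, rfl⟩, h_max⟩ := (Set.toFinite
    {S : Finset V | ∃ p : G.Walk v v, p.darts.Nodup ∧ p.support.toFinset = S}).exists_maximal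
    ⟨_, .nil, by simp, rfl⟩
  refine ⟨p, hp, eq_univ_iff_forall.2 fun u => ?_⟩
  by_contra hu
  obtain ⟨d, -, hfst, hsnd⟩ := (hG.preconnected v u).some.exists_boundary_dart
    {x | x ∈ p.support} p.start_mem_support (by simpa using hu)
  obtain ⟨q, hq, h_insert⟩ := exists_closedWalk_insert p hp d hfst hsnd
  have : d.snd ∈ p.support.toFinset :=
    h_max ⟨q, hq, h_insert⟩ (subset_insert _ _) (mem_insert_self _ _)
  exact hsnd (List.mem_toFinset.1 this)

lemma sum_darts_eq_sum_sum_neighborFinset [Fintype V] [DecidableRel G.Adj] {M : Type*}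
    [AddCommMonoid M] (f : V → V → M) :
    ∑ d : G.Dart, f d.fst d.snd = ∑ w, ∑ u ∈ G.neighborFinset w, f u w := by
  rw [sum_sigma']
  refine sum_bij' (fun d _ => ⟨d.snd, d.fst⟩)
    (fun s hs => ⟨(s.2, s.1), ((G.mem_neighborFinset _ _).1 (mem_sigma.1 hs).2).symm⟩)
    (fun d _ => ?_) (fun _ _ => mem_univ _) (fun _ _ => rfl) (fun _ _ => rfl) (fun _ _ => rfl)
  simpa using d.adj.symm

theorem expCover_le_mul_card_edgeFinset [Fintype V] [DecidableEq V] [DecidableRel G.Adj]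
    (hG : G.Connected) (v : V) :
    expCover G v ≤ ((Fintype.card V - 1) * (2 * #G.edgeFinset) : ℕ) := by
  obtain ⟨p, hp, h_univ⟩ := exists_closedWalk_darts_nodup hG v
  calc expCover G v
      ≤ (p.darts.map fun d => expHit G d.fst d.snd).sum := by
        rw [← expVisit_univ, ← h_univ]
        exact expVisit_support_le_sum_expHit p
    _ = ∑ d ∈ p.darts.toFinset, expHit G d.fst d.snd := (List.sum_toFinset _ hp).symm
    _ ≤ ∑ d : G.Dart, expHit G d.fst d.snd := sum_le_sum_of_subset (subset_univ _)
    _ = ∑ w, ∑ u ∈ G.neighborFinset w, expHit G u w := sum_darts_eq_sum_sum_neighborFinset _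
    _ ≤ ∑ w, ((∑ x ∈ univ.erase w, G.degree x : ℕ) : ℝ≥0∞) :=
        sum_le_sum fun w _ => sum_expHit_neighborFinset_le G w
    _ = ((Fintype.card V - 1) * (2 * #G.edgeFinset) : ℕ) := by
        rw [← Nat.cast_sum, sum_comm' (t' := univ) (s' := univ.erase) (by simp [eq_comm]),
          ← G.sum_degrees_eq_twice_card_edges, mul_sum]
        simp

end ClosedWalk

section StraightLineDrawing

variable {V : Type*} {G : SimpleGraph V}

/-- `p` is a planar straight-line drawing of `G`: its vertices are drawn at distinct points, and
no two distinct edges, nor an edge and a vertex, meet in the relative interior of an edge. -/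
structure IsStraightLineDrawing {E : Type*} [AddCommGroup E] [Module ℝ E] (G : SimpleGraph V)
    (p : V → E) : Prop where
  injective : Function.Injective p
  notMem_openSegment {a b : V} : G.Adj a b → ∀ c, p c ∉ openSegment ℝ (p a) (p b)
  disjoint_openSegment {a b c d : V} : G.Adj a b → G.Adj c d → s(a, b) ≠ s(c, d) →
    Disjoint (openSegment ℝ (p a) (p b)) (openSegment ℝ (p c) (p d))

lemma IsStraightLineDrawing.linearMap_comp {E F : Type*} [AddCommGroup E] [Module ℝ E]
    [AddCommGroup F] [Module ℝ F] {p : V → E} (hp : IsStraightLineDrawing G p) {L : E →ₗ[ℝ] F}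
    (hL : Function.Injective L) : IsStraightLineDrawing G (L ∘ p) where
  injective := hL.comp hp.injective
  notMem_openSegment {a b} hab c := by
    have h_image := image_openSegment ℝ L.toAffineMap (p a) (p b)
    simp only [L.coe_toAffineMap] at h_image
    simpa only [Function.comp_apply, ← h_image, hL.mem_set_image] using hp.notMem_openSegment hab c
  disjoint_openSegment {a b c d} hab hcd h := by
    have h_image (u v : V) := image_openSegment ℝ L.toAffineMap (p u) (p v)
    simp only [L.coe_toAffineMap] at h_image
    simpa only [Function.comp_apply, ← h_image, Set.disjoint_image_iff hL] using
      hp.disjoint_openSegment hab hcd h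

/-- `e` is an edge of `G`, directed from its left to its right endpoint in the drawing `p`. -/
def IsRightward (G : SimpleGraph V) (p : V → ℝ × ℝ) (e : V × V) : Prop :=
  G.Adj e.1 e.2 ∧ (p e.1).1 < (p e.2).1

/-- The open interval of abscissas strictly between the endpoints of a rightward edge. -/
def edgeSpan (p : V → ℝ × ℝ) (e : V × V) : Set ℝ := Set.Ioo (p e.1).1 (p e.2).1

/-- The slope of the line through the endpoints of `e`. -/
noncomputable def edgeSlope (p : V → ℝ × ℝ) (e : V × V) : ℝ :=
  ((p e.2).2 - (p e.1).2) / ((p e.2).1 - (p e.1).1)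

/-- The ordinate at `x` of the line through the endpoints of `e`. -/
noncomputable def edgeHeight (p : V → ℝ × ℝ) (e : V × V) (x : ℝ) : ℝ :=
  (p e.1).2 + edgeSlope p e * (x - (p e.1).1)

/-- The edge `e` runs strictly below the edge `f` above some abscissa interior to both. In a planar
drawing it then does so above every such abscissa. -/
def IsBelow (p : V → ℝ × ℝ) (e f : V × V) : Prop :=
  ∃ x ∈ edgeSpan p e ∩ edgeSpan p f, edgeHeight p e x < edgeHeight p f x

variable {p : V → ℝ × ℝ} {e f : V × V} {x : ℝ}

lemma edgeSpan_inter_nonempty : (edgeSpan p e ∩ edgeSpan p f).Nonempty ↔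
    ((p e.1).1 < (p e.2).1 ∧ (p f.1).1 < (p e.2).1) ∧
      (p e.1).1 < (p f.2).1 ∧ (p f.1).1 < (p f.2).1 := by
  simp [edgeSpan, Set.Ioo_inter_Ioo]

lemma closure_edgeSpan_inter (h : (edgeSpan p e ∩ edgeSpan p f).Nonempty) :
    closure (edgeSpan p e ∩ edgeSpan p f) =
      Set.Icc (p e.1).1 (p e.2).1 ∩ Set.Icc (p f.1).1 (p f.2).1 := by
  rw [edgeSpan, edgeSpan, Set.Ioo_inter_Ioo] at h ⊢
  rw [closure_Ioo (Set.nonempty_Ioo.1 h).ne, Set.Icc_inter_Icc]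

lemma continuous_edgeHeight : Continuous (edgeHeight p e) := by
  unfold edgeHeight
  fun_prop

lemma edgeHeight_fst : edgeHeight p e (p e.1).1 = (p e.1).2 := by
  simp [edgeHeight]

lemma edgeHeight_snd (he : (p e.1).1 < (p e.2).1) : edgeHeight p e (p e.2).1 = (p e.2).2 := by
  rw [edgeHeight, edgeSlope, div_mul_cancel₀ _ (sub_pos.2 he).ne', add_sub_cancel]

lemma mk_edgeHeight_mem_openSegment (hx : x ∈ edgeSpan p e) :
    (x, edgeHeight p e x) ∈ openSegment ℝ (p e.1) (p e.2) := by
  have h_pos : 0 < (p e.2).1 - (p e.1).1 := sub_pos.2 (hx.1.trans hx.2)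
  rw [openSegment_eq_image']
  refine ⟨(x - (p e.1).1) / ((p e.2).1 - (p e.1).1),
    ⟨div_pos (sub_pos.2 hx.1) h_pos, (div_lt_one h_pos).2 (sub_lt_sub_right hx.2 _)⟩, ?_⟩
  ext
  · simp [h_pos.ne']
  · simp [edgeHeight, edgeSlope, div_mul_comm]

lemma isBelow_iff_edgeSlope_lt (he : (p e.1).1 < (p e.2).1) (hf : (p f.1).1 < (p f.2).1)
    (h : e.1 = f.1) : IsBelow p e f ↔ edgeSlope p e < edgeSlope p f := by
  have key {x : ℝ} (hx : (p e.1).1 < x) :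
      edgeHeight p e x < edgeHeight p f x ↔ edgeSlope p e < edgeSlope p f := by
    have h_pos : 0 < x - (p f.1).1 := by rwa [sub_pos, ← h]
    rw [edgeHeight, edgeHeight, h, add_lt_add_iff_left, mul_lt_mul_iff_left₀ h_pos]
  refine ⟨fun ⟨x, hx, hlt⟩ => (key hx.1.1).1 hlt, fun hlt => ?_⟩
  obtain ⟨x, hx⟩ : (edgeSpan p e ∩ edgeSpan p f).Nonempty := by
    simp [edgeSpan_inter_nonempty, he, hf, h ▸ he, h ▸ hf]
  exact ⟨x, hx, (key hx.1.1).2 hlt⟩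

namespace IsStraightLineDrawing

lemma eq_of_edgeHeight_eq (hp : IsStraightLineDrawing G p) (he : IsRightward G p e)
    (hf : IsRightward G p f) (hx : x ∈ edgeSpan p e ∩ edgeSpan p f)
    (h : edgeHeight p e x = edgeHeight p f x) : e = f := by
  by_contra hne
  refine Set.disjoint_left.1 (hp.disjoint_openSegment he.1 hf.1 fun hs => ?_)
    (mk_edgeHeight_mem_openSegment hx.1) (h ▸ mk_edgeHeight_mem_openSegment hx.2)
  obtain heq | heq := Sym2.mk_eq_mk_iff.1 hs
  · exact hne heq
  · rw [heq] at he
    exact he.2.not_gt hf.2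

lemma edgeHeight_ne (hp : IsStraightLineDrawing G p) (he : IsRightward G p e) {c : V}
    (hc : (p c).1 ∈ edgeSpan p e) : edgeHeight p e (p c).1 ≠ (p c).2 := fun h =>
  hp.notMem_openSegment he.1 c <| by simpa only [h] using mk_edgeHeight_mem_openSegment hc

lemma isBelow_or_isBelow (hp : IsStraightLineDrawing G p) (he : IsRightward G p e)
    (hf : IsRightward G p f) (h : (edgeSpan p e ∩ edgeSpan p f).Nonempty) (hne : e ≠ f) :
    IsBelow p e f ∨ IsBelow p f e := by
  obtain ⟨x, hx⟩ := h
  obtain hlt | heq | hgt := lt_trichotomy (edgeHeight p e x) (edgeHeight p f x)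
  · exact .inl ⟨x, hx, hlt⟩
  · exact absurd (hp.eq_of_edgeHeight_eq he hf hx heq) hne
  · exact .inr ⟨x, hx.symm, hgt⟩

lemma edgeHeight_lt_of_isBelow (hp : IsStraightLineDrawing G p) (he : IsRightward G p e)
    (hf : IsRightward G p f) (h : IsBelow p e f) (hx : x ∈ edgeSpan p e ∩ edgeSpan p f) :
    edgeHeight p e x < edgeHeight p f x := by
  obtain ⟨y, hy, hlt⟩ := h
  by_contra! hle
  have h_conn : IsPreconnected (edgeSpan p e ∩ edgeSpan p f) :=
    (Set.ordConnected_Ioo.inter Set.ordConnected_Ioo).isPreconnected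
  obtain ⟨z, hz, heq⟩ := h_conn.intermediate_value₂ hy hx continuous_edgeHeight.continuousOn
    continuous_edgeHeight.continuousOn hlt.le hle
  exact hlt.ne (by rw [hp.eq_of_edgeHeight_eq he hf hz heq])

lemma edgeHeight_le_of_isBelow (hp : IsStraightLineDrawing G p) (he : IsRightward G p e)
    (hf : IsRightward G p f) (h : IsBelow p e f) (hxe : x ∈ Set.Icc (p e.1).1 (p e.2).1)
    (hxf : x ∈ Set.Icc (p f.1).1 (p f.2).1) : edgeHeight p e x ≤ edgeHeight p f x := by
  have hx : x ∈ closure (edgeSpan p e ∩ edgeSpan p f) := by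
    obtain ⟨y, hy, -⟩ := h
    rw [closure_edgeSpan_inter ⟨y, hy⟩]
    exact ⟨hxe, hxf⟩
  exact closure_minimal (fun y hy => (hp.edgeHeight_lt_of_isBelow he hf h hy).le)
    (isClosed_le continuous_edgeHeight continuous_edgeHeight) hx

lemma isBelow_of_edgeHeight_lt (hp : IsStraightLineDrawing G p) (he : IsRightward G p e)
    (hf : IsRightward G p f) (h : (edgeSpan p e ∩ edgeSpan p f).Nonempty)
    (hxe : x ∈ Set.Icc (p e.1).1 (p e.2).1) (hxf : x ∈ Set.Icc (p f.1).1 (p f.2).1)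
    (hlt : edgeHeight p e x < edgeHeight p f x) : IsBelow p e f :=
  (hp.isBelow_or_isBelow he hf h fun heq => hlt.ne (by rw [heq])).resolve_right fun hfe =>
    (hp.edgeHeight_le_of_isBelow hf he hfe hxf hxe).not_gt hlt

end IsStraightLineDrawing

/-- The edges leaving `v` to the right. -/
def outEdges (G : SimpleGraph V) (p : V → ℝ × ℝ) (v : V) : Set (V × V) :=
  {e | IsRightward G p e ∧ e.1 = v}

/-- The edges arriving at `v` from the left. -/
def inEdges (G : SimpleGraph V) (p : V → ℝ × ℝ) (v : V) : Set (V × V) :=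
  {e | IsRightward G p e ∧ e.2 = v}

/-- The edges passing strictly above the point `p v`. -/
def edgesAbove (G : SimpleGraph V) (p : V → ℝ × ℝ) (v : V) : Set (V × V) :=
  {e | IsRightward G p e ∧ (p v).1 ∈ edgeSpan p e ∧ (p v).2 < edgeHeight p e (p v).1}

/-- `e` belongs to the set `S` of edges and no edge of `S` is below it. Every rightward edge will be
charged to a vertex `v` for which it is lowest in `outEdges`, `inEdges` or `edgesAbove`. -/
def IsLowest (p : V → ℝ × ℝ) (S : Set (V × V)) (e : V × V) : Prop :=
  e ∈ S ∧ ∀ f ∈ S, ¬ IsBelow p f e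

/-- The vertices drawn in the closed wedge spanned by two edges `f` and `e` with the same left
endpoint, `f` being the lower one, up to the first abscissa where one of them ends. The apex is
excluded. -/
def wedge (p : V → ℝ × ℝ) (f e : V × V) : Set V :=
  {c | (p e.1).1 < (p c).1 ∧ (p c).1 ≤ (p f.2).1 ∧ (p c).1 ≤ (p e.2).1 ∧
    (p c).2 ∈ Set.Icc (edgeHeight p f (p c).1) (edgeHeight p e (p c).1)}

lemma exists_isBelow_of_not_isLowest_outEdges [Finite V] (he : IsRightward G p e)
    (h : ¬ IsLowest p (outEdges G p e.1) e) :
    ∃ f ∈ outEdges G p e.1, IsBelow p f e ∧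
      ∀ g ∈ outEdges G p e.1, IsBelow p g e → ¬ IsBelow p f g := by
  obtain ⟨f₀, hf₀, hf₀e⟩ : ∃ f ∈ outEdges G p e.1, IsBelow p f e := by
    simpa [IsLowest, outEdges, he] using h
  obtain ⟨f, ⟨hf, hfe⟩, h_max⟩ := Set.exists_max_image {f | f ∈ outEdges G p e.1 ∧ IsBelow p f e}
    (edgeSlope p) (Set.toFinite _) ⟨f₀, hf₀, hf₀e⟩
  refine ⟨f, hf, hfe, fun g hg hge hfg => (h_max g ⟨hg, hge⟩).not_gt ?_⟩
  exact (isBelow_iff_edgeSlope_lt hf.1.2 hg.1.2 (hf.2.trans hg.2.symm)).1 hfg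

namespace IsStraightLineDrawing

lemma wedge_nonempty (hp : IsStraightLineDrawing G p) (he : IsRightward G p e)
    (hf : f ∈ outEdges G p e.1) (hfe : IsBelow p f e) : (wedge p f e).Nonempty := by
  obtain ⟨hf, h_fst⟩ := hf
  have hf_lt := hf.2
  rw [h_fst] at hf_lt
  obtain h | h := le_total (p e.2).1 (p f.2).1
  · refine ⟨e.2, he.2, h, le_rfl, ?_, (edgeHeight_snd he.2).ge⟩
    exact (hp.edgeHeight_le_of_isBelow hf he hfe ⟨h_fst ▸ he.2.le, h⟩ ⟨he.2.le, le_rfl⟩).trans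
      (edgeHeight_snd he.2).le
  · refine ⟨f.2, hf_lt, le_rfl, h, (edgeHeight_snd hf.2).le, ?_⟩
    exact (edgeHeight_snd hf.2).ge.trans
      (hp.edgeHeight_le_of_isBelow hf he hfe ⟨hf.2.le, le_rfl⟩ ⟨hf_lt.le, h⟩)

/-- An edge entering the wedge between consecutive edges at `v` would have to start at a vertex of
the wedge, further left than `z`. -/
lemma not_isBelow_of_leftmost (hp : IsStraightLineDrawing G p)
    (hX : Function.Injective fun v => (p v).1) (he : IsRightward G p e)
    (hf : f ∈ outEdges G p e.1)
    (h_next : ∀ g ∈ outEdges G p e.1, IsBelow p g e → ¬ IsBelow p f g) {z : V}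
    (hz : z ∈ wedge p f e) (h_left : ∀ c ∈ wedge p f e, (p z).1 ≤ (p c).1) {g : V × V}
    (hg : IsRightward G p g) (hgz : (p z).1 ∈ Set.Ioc (p g.1).1 (p g.2).1)
    (hfg : IsBelow p f g) : ¬ IsBelow p g e := by
  intro hge
  obtain ⟨hf, h_fst⟩ := hf
  obtain ⟨hz_lt, hzf, hze, -⟩ := hz
  have h_between {x : ℝ} (hex : (p e.1).1 ≤ x) (hxz : x < (p z).1) (hgx : (p g.1).1 ≤ x) :
      edgeHeight p f x ≤ edgeHeight p g x ∧ edgeHeight p g x ≤ edgeHeight p e x :=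
    have hx_g : x ∈ Set.Icc (p g.1).1 (p g.2).1 := ⟨hgx, hxz.le.trans hgz.2⟩
    ⟨hp.edgeHeight_le_of_isBelow hf hg hfg ⟨h_fst ▸ hex, hxz.le.trans hzf⟩ hx_g,
      hp.edgeHeight_le_of_isBelow hg he hge hx_g ⟨hex, hxz.le.trans hze⟩⟩
  obtain hlt | heq | hgt := lt_trichotomy (p g.1).1 (p e.1).1
  · have h_apex := h_between le_rfl hz_lt hlt.le
    rw [edgeHeight_fst, ← h_fst, edgeHeight_fst, h_fst] at h_apex
    exact hp.edgeHeight_ne hg ⟨hlt, hz_lt.trans_le hgz.2⟩ (le_antisymm h_apex.2 h_apex.1)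
  · exact h_next g ⟨hg, hX heq⟩ hge hfg
  · have h_start := h_between hgt.le hgz.1 le_rfl
    rw [edgeHeight_fst] at h_start
    exact (h_left g.1 ⟨hgt, hgz.1.le.trans hzf, hgz.1.le.trans hze, h_start⟩).not_gt hgz.1

/-- If `e` is not the lowest edge leaving its left endpoint `v`, consider the wedge between `e`
and the next lower edge leaving `v`: no edge can separate `e` from the leftmost vertex of it. -/
lemma exists_isLowest [Finite V] (hp : IsStraightLineDrawing G p)
    (hX : Function.Injective fun v => (p v).1) (he : IsRightward G p e) :
    ∃ v, IsLowest p (outEdges G p v) e ∨ IsLowest p (inEdges G p v) e ∨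
      IsLowest p (edgesAbove G p v) e := by
  by_cases h_out : IsLowest p (outEdges G p e.1) e
  · exact ⟨e.1, .inl h_out⟩
  obtain ⟨f, hf, hfe, h_next⟩ := exists_isBelow_of_not_isLowest_outEdges he h_out
  obtain ⟨z, hz, h_left⟩ := Set.exists_min_image (wedge p f e) (fun v => (p v).1) (Set.toFinite _)
    (hp.wedge_nonempty he hf hfe)
  have h_separate {g : V × V} (hg : IsRightward G p g)
      (hgz : (p z).1 ∈ Set.Ioc (p g.1).1 (p g.2).1)
      (hlt : edgeHeight p f (p z).1 < edgeHeight p g (p z).1) : ¬ IsBelow p g e := by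
    refine hp.not_isBelow_of_leftmost hX he hf h_next hz h_left hg hgz ?_
    have hfz : (p f.1).1 < (p z).1 := hf.2 ▸ hz.1
    exact hp.isBelow_of_edgeHeight_lt hf.1 hg
      (edgeSpan_inter_nonempty.2 ⟨⟨hf.1.2, hgz.1.trans_le hz.2.1⟩, hfz.trans_le hgz.2, hg.2⟩)
      ⟨hfz.le, hz.2.1⟩ ⟨hgz.1.le, hgz.2⟩ hlt
  refine ⟨z, .inr ?_⟩
  obtain ⟨hz_lt, hzf, hze, hfz, hez⟩ := hz
  obtain rfl | hz_ne := eq_or_ne e.2 z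
  · have h_ne : e.2 ≠ f.2 := fun h => by
      obtain ⟨x, -, hlt⟩ := hfe
      exact hlt.ne (by rw [Prod.ext hf.2 h.symm])
    have h_lt := hfz.lt_of_ne
      (hp.edgeHeight_ne hf.1 ⟨hf.2 ▸ hz_lt, hzf.lt_of_ne (hX.ne h_ne)⟩)
    refine .inl ⟨⟨he, rfl⟩, fun g ⟨hg, h_snd⟩ => h_separate hg ?_ ?_⟩ <;> rw [← h_snd]
    · exact ⟨hg.2, le_rfl⟩
    · rwa [edgeHeight_snd hg.2, h_snd]
  · have hz_span : (p z).1 ∈ edgeSpan p e := ⟨hz_lt, hze.lt_of_ne (hX.ne hz_ne.symm)⟩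
    exact .inr ⟨⟨he, hz_span, hez.lt_of_ne (hp.edgeHeight_ne he hz_span).symm⟩,
      fun g ⟨hg, hgz, hlt⟩ => h_separate hg ⟨hgz.1, hgz.2.le⟩ (hfz.trans_lt hlt)⟩

lemma card_isLowest_le [Fintype V] (hp : IsStraightLineDrawing G p) {S : V → Set (V × V)}
    (hS : ∀ v, ∀ e ∈ S v, IsRightward G p e)
    (h_span : ∀ v, ∀ e ∈ S v, ∀ f ∈ S v, (edgeSpan p e ∩ edgeSpan p f).Nonempty)
    [DecidablePred fun e => ∃ v, IsLowest p (S v) e] :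
    #{e : V × V | ∃ v, IsLowest p (S v) e} ≤ Fintype.card V := by
  refine card_le_card_of_forall_subsingleton (fun e v => IsLowest p (S v) e)
    (fun e he => by simpa using he) fun v _ e he f hf => ?_
  by_contra hne
  have he := he.2
  have hf := hf.2
  obtain h | h := hp.isBelow_or_isBelow (hS v e he.1) (hS v f hf.1) (h_span v e he.1 f hf.1) hne
  · exact hf.2 e he.1 h
  · exact he.2 f hf.1 h

open Classical in
lemma card_isRightward_le [Fintype V] (hp : IsStraightLineDrawing G p)
    (hX : Function.Injective fun v => (p v).1) :
    #{e | IsRightward G p e} ≤ 3 * Fintype.card V := by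
  let lowest (S : V → Set (V × V)) : Finset (V × V) := {e | ∃ v, IsLowest p (S v) e}
  calc #{e | IsRightward G p e}
      ≤ #(lowest (outEdges G p) ∪ (lowest (inEdges G p) ∪ lowest (edgesAbove G p))) := by
        refine card_le_card fun e he => ?_
        simpa [lowest, exists_or] using hp.exists_isLowest hX (mem_filter.1 he).2
    _ ≤ #(lowest (outEdges G p)) + (#(lowest (inEdges G p)) + #(lowest (edgesAbove G p))) :=
        (card_union_le _ _).trans (by gcongr; exact card_union_le _ _)
    _ ≤ Fintype.card V + (Fintype.card V + Fintype.card V) := by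
        gcongr <;> refine hp.card_isLowest_le (fun v e he => he.1) fun v e he f hf => ?_
        · have := he.1.2
          have := hf.1.2
          simp_all [edgeSpan_inter_nonempty, outEdges]
        · have := he.1.2
          have := hf.1.2
          simp_all [edgeSpan_inter_nonempty, inEdges]
        · exact ⟨_, he.2.1, hf.2.1⟩
    _ = 3 * Fintype.card V := by ring

lemma card_edgeFinset_le_of_injective_fst [Fintype V] [Fintype G.edgeSet]
    (hp : IsStraightLineDrawing G p) (hX : Function.Injective fun v => (p v).1) :
    #G.edgeFinset ≤ 3 * Fintype.card V := by
  classical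
  refine (card_le_card fun s hs => ?_).trans
    ((card_image_le (f := fun e : V × V => s(e.1, e.2))).trans (hp.card_isRightward_le hX))
  induction s with
  | _ a b =>
    have hab : G.Adj a b := by simpa using hs
    obtain hlt | hgt := (hX.ne hab.ne).lt_or_gt
    · exact mem_image.2 ⟨(a, b), by simpa using ⟨hab, hlt⟩, rfl⟩
    · exact mem_image.2 ⟨(b, a), by simpa using ⟨hab.symm, hgt⟩, Sym2.eq_swap⟩

end IsStraightLineDrawing

lemma exists_injective_fst_add_mul_snd [Finite V] (hp : Function.Injective p) :
    ∃ t : ℝ, Function.Injective fun v => (p v).1 + t * (p v).2 := by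
  obtain ⟨t, ht⟩ := (Set.finite_range fun e : V × V =>
    -((p e.1).1 - (p e.2).1) / ((p e.1).2 - (p e.2).2)).exists_notMem
  refine ⟨t, fun u v huv => ?_⟩
  by_contra hne
  obtain h | h := eq_or_ne (p u).2 (p v).2
  · refine hne (hp (Prod.ext ?_ h))
    simpa [h] using huv
  · refine ht ⟨(u, v), ?_⟩
    rw [div_eq_iff (sub_ne_zero.2 h)]
    linear_combination -huv

theorem IsStraightLineDrawing.card_edgeFinset_le [Fintype V] [Fintype G.edgeSet] {E : Type*}
    [AddCommGroup E] [Module ℝ E] {p : V → E} (hp : IsStraightLineDrawing G p)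
    (hE : Module.finrank ℝ E = 2) : #G.edgeFinset ≤ 3 * Fintype.card V := by
  have : FiniteDimensional ℝ E := Module.finite_of_finrank_eq_succ hE
  let L : E ≃ₗ[ℝ] ℝ × ℝ := LinearEquiv.ofFinrankEq E (ℝ × ℝ) (by simp [hE])
  obtain ⟨t, ht⟩ := exists_injective_fst_add_mul_snd (L.injective.comp hp.injective)
  let shear : ℝ × ℝ →ₗ[ℝ] ℝ × ℝ :=
    (LinearMap.fst ℝ ℝ ℝ + t • LinearMap.snd ℝ ℝ ℝ).prod (LinearMap.snd ℝ ℝ ℝ)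
  have h_shear : Function.Injective shear := fun a b hab => by
    obtain ⟨h_fst, h_snd⟩ : a.1 + t * a.2 = b.1 + t * b.2 ∧ a.2 = b.2 := by
      simpa [shear, Prod.ext_iff] using hab
    exact Prod.ext (by simpa [h_snd] using h_fst) h_snd
  exact ((hp.linearMap_comp (L := L.toLinearMap) L.injective).linearMap_comp
    h_shear).card_edgeFinset_le_of_injective_fst ht

end StraightLineDrawing

section BallPacking

variable {V : Type*} {G : SimpleGraph V} {E : Type*} [NormedAddCommGroup E]

/-- The closed balls with centers `z v` and radii `r v > 0` have disjoint interiors, and those of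
adjacent vertices are tangent; balls of nonadjacent vertices may be tangent as well. -/
structure IsBallPacking (G : SimpleGraph V) (z : V → E) (r : V → ℝ) : Prop where
  pos (v : V) : 0 < r v
  add_le_dist {u v : V} : u ≠ v → r u + r v ≤ dist (z u) (z v)
  dist_eq_add {u v : V} : G.Adj u v → dist (z u) (z v) = r u + r v

namespace IsBallPacking

variable {z : V → E} {r : V → ℝ} {a b c d : V} {x : E}

lemma injective (h : IsBallPacking G z r) : Function.Injective z := fun u v huv => by
  by_contra hne
  have := h.add_le_dist hne
  rw [huv, dist_self] at this
  linarith [h.pos u, h.pos v]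

lemma dist_eq_of_mem (h : IsBallPacking G z r) (hab : a ≠ b)
    (ha : x ∈ Metric.closedBall (z a) (r a)) (hb : x ∈ Metric.closedBall (z b) (r b)) :
    dist x (z a) = r a := by
  have := h.add_le_dist hab
  have := dist_triangle_left (z a) (z b) x
  rw [Metric.mem_closedBall] at ha hb
  linarith

variable [NormedSpace ℝ E]

lemma sameRay_of_mem [StrictConvexSpace ℝ E] (h : IsBallPacking G z r) (hab : a ≠ b)
    (ha : x ∈ Metric.closedBall (z a) (r a)) (hb : x ∈ Metric.closedBall (z b) (r b)) :
    SameRay ℝ (x - z a) (z b - x) := by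
  refine (dist_add_dist_eq_iff.1 (le_antisymm ?_ (dist_triangle _ x _))).sameRay_vsub
  rw [dist_comm _ x, h.dist_eq_of_mem hab ha hb, h.dist_eq_of_mem hab.symm hb ha]
  exact h.add_le_dist hab

/-- The directions from `x` to the three centers would be pairwise opposite. -/
lemma notMem_closedBall_of_mem_of_mem [StrictConvexSpace ℝ E] (h : IsBallPacking G z r)
    (hab : a ≠ b) (hac : a ≠ c) (hbc : b ≠ c) (ha : x ∈ Metric.closedBall (z a) (r a))
    (hb : x ∈ Metric.closedBall (z b) (r b)) : x ∉ Metric.closedBall (z c) (r c) := by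
  intro hc
  have h_ne {u v : V} (huv : u ≠ v) (hu : x ∈ Metric.closedBall (z u) (r u))
      (hv : x ∈ Metric.closedBall (z v) (r v)) : x - z u ≠ 0 := by
    rw [← norm_pos_iff, ← dist_eq_norm, h.dist_eq_of_mem huv hu hv]
    exact h.pos u
  have h_ab : SameRay ℝ (x - z a) (z b - x) := h.sameRay_of_mem hab ha hb
  have h_bc : SameRay ℝ (z b - x) (x - z c) := by
    simpa using (h.sameRay_of_mem hbc hb hc).neg
  have h_ca : SameRay ℝ (x - z c) (-(x - z a)) := by
    simpa using h.sameRay_of_mem hac.symm hc ha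
  have h_ac : SameRay ℝ (x - z a) (x - z c) :=
    h_ab.trans h_bc fun hb0 => absurd (sub_eq_zero.1 hb0).symm (sub_ne_zero.1 (h_ne hab.symm hb ha))
  exact h_ne hac ha hc <| eq_zero_of_sameRay_self_neg <|
    h_ac.trans h_ca fun hc0 => absurd hc0 (h_ne hac.symm hc ha)

lemma dist_add_dist_of_mem_openSegment (h : IsBallPacking G z r) (hab : G.Adj a b)
    (hx : x ∈ openSegment ℝ (z a) (z b)) : dist x (z a) + dist x (z b) = r a + r b := by
  rw [dist_comm x, (mem_segment_iff_wbtw.1 (openSegment_subset_segment ℝ _ _ hx)).dist_add_dist,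
    h.dist_eq_add hab]

lemma mem_closedBall_or_mem_closedBall (h : IsBallPacking G z r) (hab : G.Adj a b)
    (hx : x ∈ openSegment ℝ (z a) (z b)) :
    x ∈ Metric.closedBall (z a) (r a) ∨ x ∈ Metric.closedBall (z b) (r b) := by
  have := h.dist_add_dist_of_mem_openSegment hab hx
  simp only [Metric.mem_closedBall]
  by_contra!
  linarith

lemma mem_closedBall_of_mem_openSegment (h : IsBallPacking G z r) (hab : G.Adj a b)
    (hx : x ∈ openSegment ℝ (z a) (z b)) (hac : a ≠ c) (ha : x ∈ Metric.closedBall (z a) (r a))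
    (hc : x ∈ Metric.closedBall (z c) (r c)) : x ∈ Metric.closedBall (z b) (r b) := by
  have := h.dist_add_dist_of_mem_openSegment hab hx
  rw [h.dist_eq_of_mem hac ha hc] at this
  exact (add_left_cancel this).le

lemma center_notMem_openSegment (h : IsBallPacking G z r) (hab : G.Adj a b) (c : V) :
    z c ∉ openSegment ℝ (z a) (z b) := by
  intro hc
  obtain rfl | hca := eq_or_ne c a
  · exact hab.ne (h.injective (left_mem_openSegment_iff.1 hc))
  obtain rfl | hcb := eq_or_ne c b
  · exact hab.ne (h.injective (right_mem_openSegment_iff.1 hc))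
  linarith [h.dist_add_dist_of_mem_openSegment hab hc, h.add_le_dist hca, h.add_le_dist hcb,
    h.pos c]

lemma eq_of_mem_openSegment_of_mem_openSegment (h : IsBallPacking G z r) (hab : G.Adj a b)
    (had : G.Adj a d) (hb : x ∈ openSegment ℝ (z a) (z b))
    (hd : x ∈ openSegment ℝ (z a) (z d)) : b = d := by
  by_contra hbd
  have h_ray {v : V} (hv : x ∈ openSegment ℝ (z a) (z v)) : SameRay ℝ (x - z a) (z v - z a) :=
    (mem_segment_iff_wbtw.1 (openSegment_subset_segment ℝ _ _ hv)).sameRay_vsub_left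
  have hxa : x - z a ≠ 0 := fun hx => h.center_notMem_openSegment hab a (sub_eq_zero.1 hx ▸ hb)
  have h_norm := ((h_ray hb).symm.trans (h_ray hd) fun hx => absurd hx hxa).norm_sub
  rw [sub_sub_sub_cancel_right, ← dist_eq_norm, ← dist_eq_norm, ← dist_eq_norm, dist_comm _ (z a),
    dist_comm _ (z a), h.dist_eq_add hab, h.dist_eq_add had, add_sub_add_left_eq_sub] at h_norm
  have := h.add_le_dist hbd
  have : |r b - r d| < r b + r d := abs_lt.2 ⟨by linarith [h.pos b], by linarith [h.pos d]⟩
  linarith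

lemma isStraightLineDrawing [StrictConvexSpace ℝ E] (h : IsBallPacking G z r) :
    IsStraightLineDrawing G z where
  injective := h.injective
  notMem_openSegment := h.center_notMem_openSegment
  disjoint_openSegment {a b c d} hab hcd hne := by
    refine Set.disjoint_left.2 fun x hx hx' => ?_
    wlog ha : x ∈ Metric.closedBall (z a) (r a) generalizing a b
    · exact this hab.symm (by rwa [Sym2.eq_swap]) (by rwa [openSegment_symm])
        ((h.mem_closedBall_or_mem_closedBall hab hx).resolve_left ha)
    wlog hc : x ∈ Metric.closedBall (z c) (r c) generalizing c d
    · exact this hcd.symm (by rwa [openSegment_symm]) (by rwa [Sym2.eq_swap (a := d)])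
        ((h.mem_closedBall_or_mem_closedBall hcd hx').resolve_left hc)
    obtain rfl | hac := eq_or_ne a c
    · exact hne (by rw [h.eq_of_mem_openSegment_of_mem_openSegment hab hcd hx hx'])
    have hb := h.mem_closedBall_of_mem_openSegment hab hx hac ha hc
    obtain rfl | hbc := eq_or_ne b c
    · have had : a ≠ d := fun had => hne (by rw [had, Sym2.eq_swap])
      exact h.notMem_closedBall_of_mem_of_mem hab.ne had hcd.ne ha hb
        (h.mem_closedBall_of_mem_openSegment hcd hx' hac.symm hb ha)
    · exact h.notMem_closedBall_of_mem_of_mem hab.ne hac hbc ha hb hc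

end IsBallPacking

lemma IsCirclePacking.isBallPacking {z : V → EuclideanSpace ℝ (Fin 2)} {r : V → ℝ}
    (h : IsCirclePacking G z r) : IsBallPacking G z r := by
  obtain ⟨h_pos, h_disjoint, h_adj⟩ := h
  have h_le {u v : V} (huv : u ≠ v) : r u + r v ≤ dist (z u) (z v) := by
    have := h_disjoint u v huv
    rwa [interior_closedBall _ (h_pos u).ne', interior_closedBall _ (h_pos v).ne',
      ← Set.disjoint_iff_inter_eq_empty, disjoint_ball_ball_iff (h_pos u) (h_pos v)] at this
  refine ⟨h_pos, h_le, fun {u v} huv => le_antisymm ?_ (h_le huv.ne)⟩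
  obtain ⟨x, hu, hv⟩ := (h_adj u v huv.ne).2 huv
  exact (dist_triangle_left _ _ x).trans (add_le_add hu hv)

theorem HasCirclePacking.card_edgeFinset_le [Fintype V] [Fintype G.edgeSet]
    (h : HasCirclePacking G) : #G.edgeFinset ≤ 3 * Fintype.card V := by
  obtain ⟨z, r, h⟩ := h
  exact h.isBallPacking.isStraightLineDrawing.card_edgeFinset_le finrank_euclideanSpace_fin

end BallPacking

/-- For every finite connected simple graph `G` with `n ≥ 2` vertices
admitting a circle packing (i.e. planar), and every vertex `v`, the expected cover time
of the simple random walk started at `v` is less than `6 n²`. -/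
theorem cover_time_upper_bound_planar :
    ∀ (V : Type) (_ : Fintype V) (_ : DecidableEq V) (G : SimpleGraph V)
      (_ : DecidableRel G.Adj),
      G.Connected → 2 ≤ Fintype.card V → HasCirclePacking G →
      ∀ v : V, expCover G v < 6 * (Fintype.card V : ℝ≥0∞) ^ 2 := by
  intro V _ _ G _ hG hn hP v
  have h_lt : (Fintype.card V - 1) * (2 * (3 * Fintype.card V)) < 6 * Fintype.card V ^ 2 := by
    have := Nat.mul_lt_mul_of_pos_right (Nat.sub_one_lt (by omega : Fintype.card V ≠ 0))
      (by omega : 0 < 6 * Fintype.card V)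
    linarith
  calc expCover G v
      ≤ ((Fintype.card V - 1) * (2 * #G.edgeFinset) : ℕ) := expCover_le_mul_card_edgeFinset hG v
    _ ≤ ((Fintype.card V - 1) * (2 * (3 * Fintype.card V)) : ℕ) := by
        gcongr
        exact hP.card_edgeFinset_le
    _ < 6 * (Fintype.card V : ℝ≥0∞) ^ 2 := by exact_mod_cast h_lt
end
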